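/- Let k be a field of characteristic p > 0, G an algebraic group over k, X a G-scheme of finite type over k, and n a positive integer. Then there exists a unique action of the quotient group G/G_n on the categorical quotient X/G_n such that the quotient morphism φ_{X,G_n} : X → X/G_n is equivariant relative to the quotient morphism φ_{G,G_n} : G → G/G_n; moreover, the induced morphism ψ_{X,G_n} : X/G_n → X^{(p^n)} is equivariant relative to ψ_{G,G_n} : G/G_n → G^{(p^n)}. -/

import Mathlib

open AlgebraicGeometry CategoryTheory CategoryTheory.Limits Opposite

universe u

noncomputable section

/-- The spectrum of the field `k`, the base of all schemes considered. -/
abbrev Spk (k : Type u) [Field k] : Scheme.{u} := Spec (CommRingCat.of k)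

/-- A scheme over the field `k`: a scheme together with a structure morphism to `Spec k`. -/
structure SchemeOver (k : Type u) [Field k] : Type (u + 1) where
  carrier : Scheme.{u}
  str : carrier ⟶ Spk k

variable (k : Type u) [Field k]

/-- A group scheme over `k`, presented via its functor of points: for every scheme `T`
and every pair of `T`-points lying over the same `T`-point of `Spec k`, a product point,
together with unit and inverse, satisfying the group axioms functorially. -/
structure GroupSchemeOver extends SchemeOver k where
  mul : ∀ {T : Scheme.{u}} (a b : T ⟶ carrier), a ≫ str = b ≫ str → (T ⟶ carrier)
  one : Spk k ⟶ carrier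
  inv : ∀ {T : Scheme.{u}}, (T ⟶ carrier) → (T ⟶ carrier)
  mul_str : ∀ {T : Scheme.{u}} (a b : T ⟶ carrier) (h), mul a b h ≫ str = a ≫ str
  one_str : one ≫ str = 𝟙 (Spk k)
  inv_str : ∀ {T : Scheme.{u}} (a : T ⟶ carrier), inv a ≫ str = a ≫ str
  mul_natural : ∀ {T' T : Scheme.{u}} (g : T' ⟶ T) (a b : T ⟶ carrier) (h h'),
    g ≫ mul a b h = mul (g ≫ a) (g ≫ b) h'
  inv_natural : ∀ {T' T : Scheme.{u}} (g : T' ⟶ T) (a : T ⟶ carrier),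
    g ≫ inv a = inv (g ≫ a)
  mul_assoc : ∀ {T : Scheme.{u}} (a b c : T ⟶ carrier) (h₁ h₂ h₃ h₄),
    mul (mul a b h₁) c h₂ = mul a (mul b c h₃) h₄
  one_mul : ∀ {T : Scheme.{u}} (a : T ⟶ carrier) (h), mul (a ≫ str ≫ one) a h = a
  mul_one : ∀ {T : Scheme.{u}} (a : T ⟶ carrier) (h), mul a (a ≫ str ≫ one) h = a
  inv_mul : ∀ {T : Scheme.{u}} (a : T ⟶ carrier) (h), mul (inv a) a h = a ≫ str ≫ one

variable {k}

theorem GroupSchemeOver.mul_congr (G : GroupSchemeOver k) {T : Scheme.{u}}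
    {a a' b b' : T ⟶ G.carrier} (ha : a = a') (hb : b = b') (h h') :
    G.mul a b h = G.mul a' b' h' := by subst ha; subst hb; rfl

/-- A homomorphism of group schemes over `k`. -/
structure GroupHom (G H : GroupSchemeOver k) where
  hom : G.carrier ⟶ H.carrier
  hom_str : hom ≫ H.str = G.str
  hom_one : G.one ≫ hom = H.one
  hom_mul : ∀ {T : Scheme.{u}} (a b : T ⟶ G.carrier) (h h'),
    G.mul a b h ≫ hom = H.mul (a ≫ hom) (b ≫ hom) h'

/-- An action of a group scheme `G` over `k` on a scheme `X` over `k`, presented via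
its functor of points. -/
structure ActionOver (G : GroupSchemeOver k) (X : SchemeOver k) where
  act : ∀ {T : Scheme.{u}} (g : T ⟶ G.carrier) (x : T ⟶ X.carrier),
    g ≫ G.str = x ≫ X.str → (T ⟶ X.carrier)
  act_str : ∀ {T : Scheme.{u}} (g : T ⟶ G.carrier) (x : T ⟶ X.carrier) (h),
    act g x h ≫ X.str = x ≫ X.str
  act_natural : ∀ {T' T : Scheme.{u}} (f : T' ⟶ T) (g : T ⟶ G.carrier)
    (x : T ⟶ X.carrier) (h h'), f ≫ act g x h = act (f ≫ g) (f ≫ x) h'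
  one_act : ∀ {T : Scheme.{u}} (x : T ⟶ X.carrier) (h), act (x ≫ X.str ≫ G.one) x h = x
  mul_act : ∀ {T : Scheme.{u}} (g g' : T ⟶ G.carrier) (x : T ⟶ X.carrier) (h₁ h₂ h₃ h₄),
    act (G.mul g g' h₁) x h₂ = act g (act g' x h₃) h₄

theorem ActionOver.act_congr {G : GroupSchemeOver k} {X : SchemeOver k}
    (α : ActionOver G X) {T : Scheme.{u}} {g g' : T ⟶ G.carrier} {x x' : T ⟶ X.carrier}
    (hg : g = g') (hx : x = x') (h h') : α.act g x h = α.act g' x' h' := by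
  subst hg; subst hx; rfl

/-- The action of a group scheme on itself by left translations. -/
def GroupSchemeOver.selfAction (G : GroupSchemeOver k) : ActionOver G G.toSchemeOver where
  act g x h := G.mul g x h
  act_str g x h := (G.mul_str g x h).trans h
  act_natural f g x h h' := G.mul_natural f g x h h'
  one_act x h := G.one_mul x h
  mul_act g g' x h₁ h₂ h₃ h₄ := G.mul_assoc g g' x h₁ h₂ h₃ h₄

/-- Restriction of an action along a homomorphism of group schemes. -/
def ActionOver.res {G H : GroupSchemeOver k} {X : SchemeOver k} (φ : GroupHom H G)
    (α : ActionOver G X) : ActionOver H X where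
  act g x h := α.act (g ≫ φ.hom) x (by rw [Category.assoc, φ.hom_str, h])
  act_str g x h := α.act_str _ _ _
  act_natural f g x h h' := by
    refine (α.act_natural f (g ≫ φ.hom) x _ ?_).trans (α.act_congr ?_ rfl _ _)
    · simp only [Category.assoc, φ.hom_str, ← h']
    · simp only [Category.assoc]
  one_act x h := by
    refine (α.act_congr ?_ rfl _ ?_).trans (α.one_act x ?_)
    · simp only [Category.assoc, φ.hom_one]
    · simp only [Category.assoc, G.one_str, Category.comp_id]
    · simp only [Category.assoc, G.one_str, Category.comp_id]
  mul_act g g' x h₁ h₂ h₃ h₄ := by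
    have hg : g ≫ H.str = x ≫ X.str := (H.mul_str g g' h₁).symm.trans h₂
    have hg' : g' ≫ H.str = x ≫ X.str := h₁.symm.trans hg
    have p1 : (g ≫ φ.hom) ≫ G.str = (g' ≫ φ.hom) ≫ G.str := by
      simp only [Category.assoc, φ.hom_str]; exact h₁
    have p3 : (g' ≫ φ.hom) ≫ G.str = x ≫ X.str := by
      simp only [Category.assoc, φ.hom_str]; exact hg'
    refine (α.act_congr (φ.hom_mul g g' h₁ p1) rfl _ ?_).trans
      (α.mul_act (g ≫ φ.hom) (g' ≫ φ.hom) x p1 ?_ p3 ?_)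
    · rw [G.mul_str]
      simp only [Category.assoc, φ.hom_str]; exact hg
    · rw [G.mul_str]
      simp only [Category.assoc, φ.hom_str]; exact hg
    · rw [α.act_str]
      simp only [Category.assoc, φ.hom_str]; exact hg
/-! ### Vector bundles and line bundles, geometrically -/

/-- The data underlying a (geometric) vector bundle on a scheme `X`: a total space `π : tot ⟶ X`
together with a fiberwise `Γ(T, ⊤)`-module structure on the `T`-points of `tot` over a fixed
`T`-point of `X`, functorially in `T`. -/
structure VecBundleData (X : Scheme.{u}) : Type (u + 1) where
  tot : Scheme.{u}
  π : tot ⟶ X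
  zero : X ⟶ tot
  zero_π : zero ≫ π = 𝟙 X
  add : ∀ {T : Scheme.{u}} (a b : T ⟶ tot), a ≫ π = b ≫ π → (T ⟶ tot)
  smul : ∀ {T : Scheme.{u}} (f : Γ(T, ⊤)) (a : T ⟶ tot), T ⟶ tot
  add_π : ∀ {T : Scheme.{u}} (a b : T ⟶ tot) (h), add a b h ≫ π = a ≫ π
  smul_π : ∀ {T : Scheme.{u}} (f : Γ(T, ⊤)) (a : T ⟶ tot), smul f a ≫ π = a ≫ π
  add_natural : ∀ {T' T : Scheme.{u}} (g : T' ⟶ T) (a b : T ⟶ tot) (h h'),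
    g ≫ add a b h = add (g ≫ a) (g ≫ b) h'
  smul_natural : ∀ {T' T : Scheme.{u}} (g : T' ⟶ T) (f : Γ(T, ⊤)) (a : T ⟶ tot),
    g ≫ smul f a = smul (g.appTop f) (g ≫ a)
  add_comm : ∀ {T : Scheme.{u}} (a b : T ⟶ tot) (h h'), add a b h = add b a h'
  add_assoc : ∀ {T : Scheme.{u}} (a b c : T ⟶ tot) (h₁ h₂ h₃ h₄),
    add (add a b h₁) c h₂ = add a (add b c h₃) h₄
  zero_add : ∀ {T : Scheme.{u}} (a : T ⟶ tot) (h), add ((a ≫ π) ≫ zero) a h = a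
  one_smul : ∀ {T : Scheme.{u}} (a : T ⟶ tot), smul 1 a = a
  mul_smul : ∀ {T : Scheme.{u}} (f g : Γ(T, ⊤)) (a : T ⟶ tot), smul (f * g) a = smul f (smul g a)
  smul_add : ∀ {T : Scheme.{u}} (f : Γ(T, ⊤)) (a b : T ⟶ tot) (h h'),
    smul f (add a b h) = add (smul f a) (smul f b) h'
  add_smul : ∀ {T : Scheme.{u}} (f g : Γ(T, ⊤)) (a : T ⟶ tot) (h),
    smul (f + g) a = add (smul f a) (smul g a) h
  zero_smul : ∀ {T : Scheme.{u}} (a : T ⟶ tot), smul 0 a = (a ≫ π) ≫ zero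
  smul_zero : ∀ {T : Scheme.{u}} (f : Γ(T, ⊤)) (x : T ⟶ X), smul f (x ≫ zero) = x ≫ zero

namespace VecBundleData

variable {X : Scheme.{u}} (E : VecBundleData X)

theorem add_congr {T : Scheme.{u}} {a a' b b' : T ⟶ E.tot} (ha : a = a') (hb : b = b')
    (h h') : E.add a b h = E.add a' b' h' := by subst ha; subst hb; rfl

/-- The fiber of a vector bundle over a `T`-point of the base. -/
abbrev Fiber {T : Scheme.{u}} (x : T ⟶ X) : Type u := { a : T ⟶ E.tot // a ≫ E.π = x }

instance fiberZero {T : Scheme.{u}} (x : T ⟶ X) : Zero (E.Fiber x) :=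
  ⟨⟨x ≫ E.zero, by rw [Category.assoc, E.zero_π, Category.comp_id]⟩⟩

instance fiberAdd {T : Scheme.{u}} (x : T ⟶ X) : Add (E.Fiber x) :=
  ⟨fun a b => ⟨E.add a.1 b.1 (a.2.trans b.2.symm), (E.add_π _ _ _).trans a.2⟩⟩

instance fiberSMul {T : Scheme.{u}} (x : T ⟶ X) : SMul Γ(T, ⊤) (E.Fiber x) :=
  ⟨fun f a => ⟨E.smul f a.1, (E.smul_π _ _).trans a.2⟩⟩

@[simp] theorem coe_fiber_zero {T : Scheme.{u}} (x : T ⟶ X) :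
    ((0 : E.Fiber x) : T ⟶ E.tot) = x ≫ E.zero := rfl

@[simp] theorem coe_fiber_add {T : Scheme.{u}} (x : T ⟶ X) (a b : E.Fiber x) :
    ((a + b : E.Fiber x) : T ⟶ E.tot) = E.add a.1 b.1 (a.2.trans b.2.symm) := rfl

@[simp] theorem coe_fiber_smul {T : Scheme.{u}} (x : T ⟶ X) (f : Γ(T, ⊤)) (a : E.Fiber x) :
    ((f • a : E.Fiber x) : T ⟶ E.tot) = E.smul f a.1 := rfl

instance {T : Scheme.{u}} (x : T ⟶ X) : AddCommMonoid (E.Fiber x) where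
  add_assoc a b c := Subtype.ext (E.add_assoc _ _ _ _ _ _ _)
  add_comm a b := Subtype.ext (E.add_comm _ _ _ _)
  zero_add a := Subtype.ext (by
    have hz : ((a.1 ≫ E.π) ≫ E.zero) ≫ E.π = a.1 ≫ E.π := by
      rw [Category.assoc, E.zero_π, Category.comp_id]
    show E.add (x ≫ E.zero) a.1 _ = a.1
    exact (E.add_congr (by rw [a.2]) rfl _ hz).trans (E.zero_add a.1 hz))
  add_zero a := Subtype.ext (by
    have hz : ((a.1 ≫ E.π) ≫ E.zero) ≫ E.π = a.1 ≫ E.π := by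
      rw [Category.assoc, E.zero_π, Category.comp_id]
    have hz' : (x ≫ E.zero) ≫ E.π = a.1 ≫ E.π := by
      rw [Category.assoc, E.zero_π, Category.comp_id, a.2]
    show E.add a.1 (x ≫ E.zero) _ = a.1
    exact (E.add_comm _ _ _ hz').trans
      ((E.add_congr (by rw [a.2]) rfl _ hz).trans (E.zero_add a.1 hz)))
  nsmul := nsmulRec
  nsmul_zero _ := rfl
  nsmul_succ _ _ := rfl

instance {T : Scheme.{u}} (x : T ⟶ X) : Module Γ(T, ⊤) (E.Fiber x) where
  one_smul a := Subtype.ext (E.one_smul a.1)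
  mul_smul f g a := Subtype.ext (E.mul_smul f g a.1)
  smul_zero f := Subtype.ext (E.smul_zero f x)
  smul_add f a b := Subtype.ext (E.smul_add f a.1 b.1 _ _)
  add_smul f g a := Subtype.ext (E.add_smul f g a.1 _)
  zero_smul a := Subtype.ext ((E.zero_smul a.1).trans (by rw [a.2]; rfl))

/-- A family of `n` local sections of `E` over an open subset `U` is a frame if every point
of the total space over `U` is, in a unique way, a linear combination of these sections. -/
def IsFrame {n : ℕ} (U : X.Opens) (s : Fin n → (U.toScheme ⟶ E.tot)) : Prop :=
  ∃ hs : ∀ i, s i ≫ E.π = U.ι,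
    ∀ {T : Scheme.{u}} (x : T ⟶ U.toScheme),
      Function.Bijective (fun f : Fin n → Γ(T, ⊤) =>
        (∑ i, f i • (⟨x ≫ s i, by rw [Category.assoc, hs i]⟩ : E.Fiber (x ≫ U.ι))))

/-- A family of `n` global sections of `E` is a global frame if every point of the total
space is, in a unique way, a linear combination of these sections. -/
def IsGlobalFrame {n : ℕ} (s : Fin n → (X ⟶ E.tot)) : Prop :=
  ∃ hs : ∀ i, s i ≫ E.π = 𝟙 X,
    ∀ {T : Scheme.{u}} (x : T ⟶ X),
      Function.Bijective (fun f : Fin n → Γ(T, ⊤) =>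
        (∑ i, f i • (⟨x ≫ s i, by rw [Category.assoc, hs i, Category.comp_id]⟩ : E.Fiber x)))

end VecBundleData

/-- A (geometric) vector bundle of rank `n` on `X`: bundle data which is locally trivial,
i.e. admits local frames around every point of `X`. -/
structure VecBundle (n : ℕ) (X : Scheme.{u}) extends VecBundleData X where
  locTriv : ∀ x : X, ∃ (U : X.Opens) (s : Fin n → (U.toScheme ⟶ tot)),
    x ∈ U ∧ toVecBundleData.IsFrame U s

/-- A (geometric) line bundle on a scheme. -/
abbrev LineBundle (X : Scheme.{u}) := VecBundle 1 X

/-- A morphism of total spaces of vector bundles over `X` is linear if it commutes with the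
projections, the fiberwise additions and the fiberwise scalar multiplications. -/
def IsLinearHom {X : Scheme.{u}} (E F : VecBundleData X) (φ : E.tot ⟶ F.tot) : Prop :=
  (φ ≫ F.π = E.π) ∧
  (∀ {T : Scheme.{u}} (a b : T ⟶ E.tot) (h h'), E.add a b h ≫ φ = F.add (a ≫ φ) (b ≫ φ) h') ∧
  (∀ {T : Scheme.{u}} (f : Γ(T, ⊤)) (a : T ⟶ E.tot), E.smul f a ≫ φ = F.smul f (a ≫ φ))

/-- Two vector bundles on `X` are isomorphic if there is a linear isomorphism between them. -/
def VBIso {X : Scheme.{u}} {n m : ℕ} (E : VecBundle n X) (F : VecBundle m X) : Prop :=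
  ∃ φ : E.tot ⟶ F.tot, IsLinearHom E.toVecBundleData F.toVecBundleData φ ∧ IsIso φ

/-- `F` is a pullback of the vector bundle `E` along `g : Y ⟶ X`. -/
def IsPullbackBundle {Y X : Scheme.{u}} (g : Y ⟶ X) {n : ℕ} (E : VecBundle n X)
    (F : VecBundle n Y) : Prop :=
  ∃ τ : F.tot ⟶ E.tot,
    (τ ≫ E.π = F.π ≫ g) ∧
    (∀ {T : Scheme.{u}} (a b : T ⟶ F.tot) (h h'), F.add a b h ≫ τ = E.add (a ≫ τ) (b ≫ τ) h') ∧
    (∀ {T : Scheme.{u}} (f : Γ(T, ⊤)) (a : T ⟶ F.tot), F.smul f a ≫ τ = E.smul f (a ≫ τ)) ∧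
    (∀ {T : Scheme.{u}} (y : T ⟶ Y) (a : T ⟶ E.tot), a ≫ E.π = y ≫ g →
      ∃! b : T ⟶ F.tot, b ≫ F.π = y ∧ b ≫ τ = a)

/-- A vector bundle is trivial if it admits a global frame. -/
def IsTrivialBundle {X : Scheme.{u}} {n : ℕ} (E : VecBundle n X) : Prop :=
  ∃ s : Fin n → (X ⟶ E.tot), E.toVecBundleData.IsGlobalFrame s

/-- `N` is a tensor product of the line bundles `L` and `M`: witnessed by a fiberwise
bilinear pairing taking local frames to local frames. -/
def IsTensor {X : Scheme.{u}} (L M N : LineBundle X) : Prop :=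
  ∃ β : ∀ {T : Scheme.{u}} (a : T ⟶ L.tot) (b : T ⟶ M.tot), a ≫ L.π = b ≫ M.π → (T ⟶ N.tot),
    (∀ {T : Scheme.{u}} (a : T ⟶ L.tot) (b : T ⟶ M.tot) (h), β a b h ≫ N.π = a ≫ L.π) ∧
    (∀ {T' T : Scheme.{u}} (g : T' ⟶ T) (a : T ⟶ L.tot) (b : T ⟶ M.tot) (h h'),
      g ≫ β a b h = β (g ≫ a) (g ≫ b) h') ∧
    (∀ {T : Scheme.{u}} (a a' : T ⟶ L.tot) (b : T ⟶ M.tot) (h₁ h₂ h₃ h₄ h₅),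
      β (L.add a a' h₁) b h₂ = N.add (β a b h₃) (β a' b h₄) h₅) ∧
    (∀ {T : Scheme.{u}} (a : T ⟶ L.tot) (b b' : T ⟶ M.tot) (h₁ h₂ h₃ h₄ h₅),
      β a (M.add b b' h₁) h₂ = N.add (β a b h₃) (β a b' h₄) h₅) ∧
    (∀ {T : Scheme.{u}} (f : Γ(T, ⊤)) (a : T ⟶ L.tot) (b : T ⟶ M.tot) (h₁ h₂),
      β (L.smul f a) b h₁ = N.smul f (β a b h₂)) ∧
    (∀ {T : Scheme.{u}} (f : Γ(T, ⊤)) (a : T ⟶ L.tot) (b : T ⟶ M.tot) (h₁ h₂),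
      β a (M.smul f b) h₁ = N.smul f (β a b h₂)) ∧
    (∀ (U : X.Opens) (sL : Fin 1 → (U.toScheme ⟶ L.tot)) (sM : Fin 1 → (U.toScheme ⟶ M.tot)),
      L.toVecBundleData.IsFrame U sL → M.toVecBundleData.IsFrame U sM →
      ∀ (h : sL 0 ≫ L.π = sM 0 ≫ M.π),
        N.toVecBundleData.IsFrame (n := 1) U (fun _ => β (sL 0) (sM 0) h))

/-- `N` is an `m`-th tensor power of the line bundle `L`. -/
def IsTensorPow {X : Scheme.{u}} (L : LineBundle X) : ℕ → LineBundle X → Prop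
  | 0, N => IsTrivialBundle N
  | m + 1, N => ∃ M : LineBundle X, IsTensorPow L m M ∧ IsTensor M L N

/-- A line bundle is ample if the base is quasi-compact and quasi-separated and the
non-vanishing loci of global sections of positive tensor powers give an affine open cover. -/
def IsAmple {X : Scheme.{u}} (L : LineBundle X) : Prop :=
  CompactSpace X ∧ QuasiSeparatedSpace X ∧
  ∀ x : X, ∃ (m : ℕ), 0 < m ∧ ∃ (N : LineBundle X), IsTensorPow L m N ∧
    ∃ (s : X ⟶ N.tot), s ≫ N.π = 𝟙 X ∧
      ∃ U : X.Opens, IsAffineOpen U ∧ x ∈ U ∧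
        (U : Set X) = {y : X | s.base y ≠ N.zero.base y}
/-! ### Properties of schemes and group schemes over `k` -/

/-- An algebraic group over `k` is a group scheme of finite type over `k`. -/
def GroupSchemeOver.IsAlgebraic {k : Type u} [Field k] (G : GroupSchemeOver k) : Prop :=
  LocallyOfFiniteType G.str ∧ QuasiCompact G.str

/-- A scheme of finite type over `k`. -/
def SchemeOver.IsFiniteType {k : Type u} [Field k] (X : SchemeOver k) : Prop :=
  LocallyOfFiniteType X.str ∧ QuasiCompact X.str

/-- A variety over `k`: an integral separated scheme of finite type over `k`. -/
def SchemeOver.IsVariety {k : Type u} [Field k] (X : SchemeOver k) : Prop :=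
  IsIntegral X.carrier ∧ AlgebraicGeometry.IsSeparated X.str ∧ X.IsFiniteType

/-- A scheme is normal if all its local rings are integrally closed domains. -/
def IsNormalScheme (X : Scheme.{u}) : Prop :=
  ∀ x : X, IsDomain (X.presheaf.stalk x) ∧ IsIntegrallyClosed (X.presheaf.stalk x)

/-- The base change of a scheme over `k` to the algebraic closure of `k`. -/
def SchemeOver.geomFiber {k : Type u} [Field k] (X : SchemeOver k) : Scheme.{u} :=
  pullback X.str (Spec.map (CommRingCat.ofHom (algebraMap k (AlgebraicClosure k))))

/-- A scheme over `k` is geometrically integral if its base change to an algebraic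
closure of `k` is integral. -/
def SchemeOver.IsGeomIntegral {k : Type u} [Field k] (X : SchemeOver k) : Prop :=
  IsIntegral X.geomFiber

/-- A scheme over `k` is geometrically connected if its base change to an algebraic
closure of `k` is connected. -/
def SchemeOver.IsGeomConnected {k : Type u} [Field k] (X : SchemeOver k) : Prop :=
  ConnectedSpace X.geomFiber

/-- A scheme over `k` is geometrically irreducible if its base change to an algebraic
closure of `k` is irreducible. -/
def SchemeOver.IsGeomIrreducible {k : Type u} [Field k] (X : SchemeOver k) : Prop :=
  IrreducibleSpace X.geomFiber

/-- An open subscheme of a scheme over `k`, as a scheme over `k`. -/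
def SchemeOver.ofOpens {k : Type u} [Field k] (X : SchemeOver k) (U : X.carrier.Opens) :
    SchemeOver k :=
  ⟨U.toScheme, U.ι ≫ X.str⟩

/-- A scheme over `k` is quasi-projective if it is separated, of finite type, and carries
an ample line bundle. -/
def SchemeOver.IsQuasiProjective {k : Type u} [Field k] (X : SchemeOver k) : Prop :=
  AlgebraicGeometry.IsSeparated X.str ∧ X.IsFiniteType ∧
    ∃ L : LineBundle X.carrier, IsAmple L

/-- An open subset of `X` is stable under an action of `G` if the action preserves its
`T`-points, for all `T`. -/
def ActionOver.Stable {k : Type u} [Field k] {G : GroupSchemeOver k} {X : SchemeOver k}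
    (α : ActionOver G X) (U : X.carrier.Opens) : Prop :=
  ∀ {T : Scheme.{u}} (g : T ⟶ G.carrier) (x : T ⟶ X.carrier) (h),
    Set.range x.base ⊆ (U : Set X.carrier) →
      Set.range (α.act g x h).base ⊆ (U : Set X.carrier)

/-- A `G`-linearization of a vector bundle `E` on a `G`-scheme `X`: an action of `G` on the
total space of `E`, lifting the action on `X` and acting linearly on the fibers (equivalently,
an action of `G × 𝔾ₘ` on `E` for which the projection is equivariant and `𝔾ₘ` acts by
multiplication on the fibers). -/
structure LinearizationData {k : Type u} [Field k] {G : GroupSchemeOver k} {X : SchemeOver k}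
    (α : ActionOver G X) {n : ℕ} (E : VecBundle n X.carrier) where
  lact : ∀ {T : Scheme.{u}} (g : T ⟶ G.carrier) (e : T ⟶ E.tot),
    g ≫ G.str = (e ≫ E.π) ≫ X.str → (T ⟶ E.tot)
  lact_π : ∀ {T : Scheme.{u}} (g : T ⟶ G.carrier) (e : T ⟶ E.tot) (h h'),
    lact g e h ≫ E.π = α.act g (e ≫ E.π) h'
  lact_natural : ∀ {T' T : Scheme.{u}} (f : T' ⟶ T) (g : T ⟶ G.carrier) (e : T ⟶ E.tot) (h h'),
    f ≫ lact g e h = lact (f ≫ g) (f ≫ e) h'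
  one_lact : ∀ {T : Scheme.{u}} (e : T ⟶ E.tot) (h), lact (((e ≫ E.π) ≫ X.str) ≫ G.one) e h = e
  mul_lact : ∀ {T : Scheme.{u}} (g g' : T ⟶ G.carrier) (e : T ⟶ E.tot) (h₁ h₂ h₃ h₄),
    lact (G.mul g g' h₁) e h₂ = lact g (lact g' e h₃) h₄
  lact_add : ∀ {T : Scheme.{u}} (g : T ⟶ G.carrier) (a b : T ⟶ E.tot) (h₁ h₂ h₃ h₄ h₅),
    lact g (E.add a b h₁) h₂ = E.add (lact g a h₃) (lact g b h₄) h₅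
  lact_smul : ∀ {T : Scheme.{u}} (g : T ⟶ G.carrier) (f : Γ(T, ⊤)) (a : T ⟶ E.tot) (h₁ h₂),
    lact g (E.smul f a) h₁ = E.smul f (lact g a h₂)

/-- A vector bundle is `G`-linearized (linearizable) if it admits a linearization. -/
def ActionOver.IsLinearized {k : Type u} [Field k] {G : GroupSchemeOver k} {X : SchemeOver k}
    (α : ActionOver G X) {n : ℕ} (E : VecBundle n X.carrier) : Prop :=
  Nonempty (LinearizationData α E)

/-- Equivariance of a morphism relative to a homomorphism of group schemes. -/
def IsEquivariantRel {k : Type u} [Field k] {G H : GroupSchemeOver k} {X Y : SchemeOver k}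
    (φ : GroupHom G H) (α : ActionOver G X) (β : ActionOver H Y)
    (f : X.carrier ⟶ Y.carrier) : Prop :=
  f ≫ Y.str = X.str ∧
  ∀ {T : Scheme.{u}} (g : T ⟶ G.carrier) (x : T ⟶ X.carrier) (h h'),
    α.act g x h ≫ f = β.act (g ≫ φ.hom) (x ≫ f) h'

/-- Equivariance of a morphism of `G`-schemes. -/
def IsEquivariant {k : Type u} [Field k] {G : GroupSchemeOver k} {X Y : SchemeOver k}
    (α : ActionOver G X) (β : ActionOver G Y) (f : X.carrier ⟶ Y.carrier) : Prop :=
  f ≫ Y.str = X.str ∧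
  ∀ {T : Scheme.{u}} (g : T ⟶ G.carrier) (x : T ⟶ X.carrier) (h h'),
    α.act g x h ≫ f = β.act g (x ≫ f) h'

/-- A `T`-point of `G` acts trivially if it acts trivially on all points of `X` over `T`. -/
def ActionOver.ActsTrivially {k : Type u} [Field k] {G : GroupSchemeOver k}
    {X : SchemeOver k} (α : ActionOver G X) {T : Scheme.{u}} (g : T ⟶ G.carrier) : Prop :=
  ∀ {T' : Scheme.{u}} (t : T' ⟶ T) (x : T' ⟶ X.carrier) (h), α.act (t ≫ g) x h = x

/-- An action is almost faithful if its kernel is finite, i.e. all trivially acting points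
factor through a fixed closed subscheme of `G` which is finite over `k`. -/
def ActionOver.IsAlmostFaithful {k : Type u} [Field k] {G : GroupSchemeOver k}
    {X : SchemeOver k} (α : ActionOver G X) : Prop :=
  ∃ (K : Scheme.{u}) (ι : K ⟶ G.carrier), IsClosedImmersion ι ∧ IsFinite (ι ≫ G.str) ∧
    ∀ {T : Scheme.{u}} (g : T ⟶ G.carrier), α.ActsTrivially g → ∃ g' : T ⟶ K, g' ≫ ι = g

/-- An abelian variety over `k` is a smooth connected proper algebraic group over `k`. -/
def GroupSchemeOver.IsAbelianVariety {k : Type u} [Field k] (G : GroupSchemeOver k) : Prop :=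
  G.IsAlgebraic ∧ IsSmooth G.str ∧ ConnectedSpace G.carrier ∧ IsProper G.str
/-! ### Frobenius twists and quotients in characteristic `p` -/

/-- The morphism `Spec k ⟶ Spec k` induced by the `n`-th iterate of the Frobenius of `k`. -/
def frobSpec (k : Type u) [Field k] (p : ℕ) [Fact p.Prime] [CharP k p] (n : ℕ) :
    Spk k ⟶ Spk k :=
  Spec.map (CommRingCat.ofHom (iterateFrobenius k p n))

/-- `F : X ⟶ X` is the absolute `q`-power Frobenius endomorphism of `X`: the identity on the
underlying space, and the `q`-th power map on functions. -/
def IsAbsoluteFrobenius (X : Scheme.{u}) (q : ℕ) (F : X ⟶ X) : Prop :=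
  (∀ x : X, F.base x = x) ∧
  ∀ (U : X.Opens) (e : Opposite.op U = Opposite.op (F ⁻¹ᵁ U)) (a : Γ(X, U)),
    F.app U a = X.presheaf.map (eqToHom e) (a ^ q)

/-- Data exhibiting the `n`-th Frobenius twist `X^{(pⁿ)}` of a scheme `X` over `k` (as the base
change of `X` along the `n`-th Frobenius of `k`), together with the relative Frobenius morphism
`F^n_{X/k} : X ⟶ X^{(pⁿ)}` (the canonical factorization of the absolute Frobenius). -/
structure FrobeniusData (k : Type u) [Field k] (p : ℕ) [Fact p.Prime] [CharP k p] (n : ℕ)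
    (X : SchemeOver k) where
  tw : SchemeOver k
  pr : tw.carrier ⟶ X.carrier
  is_pullback : IsPullback pr tw.str X.str (frobSpec k p n)
  rel : X.carrier ⟶ tw.carrier
  rel_str : rel ≫ tw.str = X.str
  abs : X.carrier ⟶ X.carrier
  abs_frob : IsAbsoluteFrobenius X.carrier (p ^ n) abs
  rel_pr : rel ≫ pr = abs

/-- A group scheme over `k` is infinitesimal if it is finite and radicial over `Spec k`. -/
def GroupSchemeOver.IsInfinitesimal {k : Type u} [Field k] (I : GroupSchemeOver k) : Prop :=
  I.IsAlgebraic ∧ IsFinite I.str ∧ UniversallyInjective I.str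

/-- `n` is at least the height of the infinitesimal group scheme `I`, i.e. the `n`-th relative
Frobenius of `I` factors through the unit section of the twist (equivalently `I_n = I`). -/
def FrobKillsAt (k : Type u) [Field k] (p : ℕ) [Fact p.Prime] [CharP k p]
    (I : GroupSchemeOver k) (n : ℕ) : Prop :=
  ∀ FD : FrobeniusData k p n I.toSchemeOver,
    ∃ u : Spk k ⟶ FD.tw.carrier,
      u ≫ FD.pr = frobSpec k p n ≫ I.one ∧ u ≫ FD.tw.str = 𝟙 (Spk k) ∧
      FD.rel = I.str ≫ u

/-- `φ : X ⟶ Q` is a categorical quotient (in the category of schemes over `k`) of `X` by the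
action `α`. -/
def IsCatQuotient {k : Type u} [Field k] {I : GroupSchemeOver k} {X : SchemeOver k}
    (α : ActionOver I X) (Q : SchemeOver k) (φ : X.carrier ⟶ Q.carrier) : Prop :=
  φ ≫ Q.str = X.str ∧
  (∀ {T : Scheme.{u}} (g : T ⟶ I.carrier) (x : T ⟶ X.carrier) (h),
    α.act g x h ≫ φ = x ≫ φ) ∧
  ∀ (Z : SchemeOver k) (u : X.carrier ⟶ Z.carrier), u ≫ Z.str = X.str →
    (∀ {T : Scheme.{u}} (g : T ⟶ I.carrier) (x : T ⟶ X.carrier) (h),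
      α.act g x h ≫ u = x ≫ u) →
    ∃! v : Q.carrier ⟶ Z.carrier, φ ≫ v = u

/-- Data exhibiting the Frobenius twist `G^{(pⁿ)}` of a group scheme `G` over `k`, as a group
scheme, together with the relative Frobenius homomorphism. -/
structure TwistedGroupData (k : Type u) [Field k] (p : ℕ) [Fact p.Prime] [CharP k p] (n : ℕ)
    (G : GroupSchemeOver k) where
  tw : GroupSchemeOver k
  pr : tw.carrier ⟶ G.carrier
  is_pullback : IsPullback pr tw.str G.str (frobSpec k p n)
  pr_mul : ∀ {T : Scheme.{u}} (a b : T ⟶ tw.carrier) (h h'),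
    tw.mul a b h ≫ pr = G.mul (a ≫ pr) (b ≫ pr) h'
  rel : GroupHom G tw
  abs : G.carrier ⟶ G.carrier
  abs_frob : IsAbsoluteFrobenius G.carrier (p ^ n) abs
  rel_pr : rel.hom ≫ pr = abs

/-- Data exhibiting the Frobenius twist of an action: the induced action of `G^{(pⁿ)}` on
`X^{(pⁿ)}`, compatible with the projections and with the relative Frobenii. -/
structure TwistedActionData {k : Type u} [Field k] {p : ℕ} [Fact p.Prime] [CharP k p] {n : ℕ}
    {G : GroupSchemeOver k} {X : SchemeOver k} (α : ActionOver G X)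
    (GT : TwistedGroupData k p n G) (FD : FrobeniusData k p n X) where
  tact : ActionOver GT.tw FD.tw
  compat : ∀ {T : Scheme.{u}} (g : T ⟶ GT.tw.carrier) (x : T ⟶ FD.tw.carrier) (h h'),
    tact.act g x h ≫ FD.pr = α.act (g ≫ GT.pr) (x ≫ FD.pr) h'
  rel_equivariant : ∀ {T : Scheme.{u}} (g : T ⟶ G.carrier) (x : T ⟶ X.carrier) (h h'),
    α.act g x h ≫ FD.rel = tact.act (g ≫ GT.rel.hom) (x ≫ FD.rel) h'

/-!
The absolute Frobenius of `X` is integral, universally injective and invariant under `G_n`. Taking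
the `G_n`-invariant functions relative to it yields a morphism `X ⟶ Y` which is a closed bijection
and which is locally on `Y` the spectrum of an equalizer of rings. Such a morphism is a categorical
quotient, so `Y` is `X/G_n`; since equalizers of rings commute with flat base change, it remains one
after every flat base change, and the same applies to `G ⟶ G/G_n`.

Everything is flat over `k`, so a morphism out of `G × X` descends to `G/G_n × X/G_n` as soon as it
is invariant under `G_n` in each factor. For `G × X ⟶ X ⟶ X/G_n` this holds because `G_n` is normal.
The action axioms, uniqueness and the equivariance of `ψ` may be tested after composing with the
epimorphism `G × X ⟶ G/G_n × X/G_n` and its analogues.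
-/

/-! ### Equalizers of rings -/

/-- `s : C ⟶ A` is the equalizer of `d₁ d₂ : A ⟶ D`, expressed on elements. -/
structure IsRingEqualizer {C A D : CommRingCat.{u}} (s : C ⟶ A) (d₁ d₂ : A ⟶ D) : Prop where
  w : s ≫ d₁ = s ≫ d₂
  injective : Function.Injective s.hom
  mem_range : ∀ a : A, d₁.hom a = d₂.hom a → a ∈ Set.range s.hom

theorem exists_comp_eq_of_injective {M C B : CommRingCat.{u}} {i : C ⟶ B}
    (hi : Function.Injective i.hom) (w : M ⟶ B) (h : ∀ x, w.hom x ∈ Set.range i.hom) :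
    ∃ v : M ⟶ C, v ≫ i = w := by
  let e : C ≃+* i.hom.range := RingEquiv.ofBijective i.hom.rangeRestrict
    ⟨fun x y hxy => hi (congrArg Subtype.val hxy), i.hom.rangeRestrict_surjective⟩
  let w' : M →+* i.hom.range := w.hom.codRestrict i.hom.range h
  refine ⟨CommRingCat.ofHom (e.symm.toRingHom.comp w'), ?_⟩
  ext x
  exact congrArg Subtype.val (e.apply_symm_apply (w' x))

theorem mem_range_includeLeft_of_map_eq {C C' A D : Type u} [CommRing C] [CommRing C'] [CommRing A]
    [CommRing D] [Algebra C C'] [Algebra C A] [Algebra C D] [Module.Flat C C'] (d₁ d₂ : A →ₐ[C] D)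
    (hex : ∀ a, d₁ a = d₂ a → a ∈ Set.range (algebraMap C A)) (z : TensorProduct C C' A)
    (hz : Algebra.TensorProduct.map (AlgHom.id C C') d₁ z =
      Algebra.TensorProduct.map (AlgHom.id C C') d₂ z) :
    z ∈ Set.range (Algebra.TensorProduct.includeLeftRingHom : C' →+* TensorProduct C C' A) := by
  have hexact : Function.Exact (Algebra.linearMap C A) (d₁.toLinearMap - d₂.toLinearMap) := by
    refine fun a => ⟨fun h => hex a (by simpa [sub_eq_zero] using h), ?_⟩
    rintro ⟨c, rfl⟩
    simp
  have hzero : LinearMap.lTensor C' (d₁.toLinearMap - d₂.toLinearMap) z = 0 := by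
    rw [LinearMap.lTensor_sub, LinearMap.sub_apply, sub_eq_zero]
    exact hz
  obtain ⟨w, rfl⟩ := (Module.Flat.lTensor_exact C' hexact z).1 hzero
  refine ⟨TensorProduct.rid C C' w, ?_⟩
  clear hzero hz
  induction w with
  | zero => simp
  | add x y hx hy => simp only [map_add, hx, hy]
  | tmul x c =>
    simp [Algebra.TensorProduct.includeLeftRingHom_apply, Algebra.algebraMap_eq_smul_one,
      TensorProduct.smul_tmul]

theorem isoIsPushout_hom_comp_map {C C' A D : Type u} [CommRing C] [CommRing C'] [CommRing A]
    [CommRing D] [Algebra C C'] [Algebra C A] [Algebra C D] (δ : A →ₐ[C] D) {B D' : CommRingCat.{u}}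
    {inl : .of C' ⟶ B} {inr : .of A ⟶ B} {inl' : .of C' ⟶ D'} {inr' : .of D ⟶ D'}
    (po : IsPushout (CommRingCat.ofHom (algebraMap C C')) (CommRingCat.ofHom (algebraMap C A))
      inl inr)
    (po' : IsPushout (CommRingCat.ofHom (algebraMap C C')) (CommRingCat.ofHom (algebraMap C D))
      inl' inr')
    {d' : B ⟶ D'} (hl : inl ≫ d' = inl') (hr : inr ≫ d' = CommRingCat.ofHom δ.toRingHom ≫ inr') :
    d' ≫ (po'.isoIsPushout _ _ (CommRingCat.isPushout_tensorProduct C C' D)).hom =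
      (po.isoIsPushout _ _ (CommRingCat.isPushout_tensorProduct C C' A)).hom ≫
        CommRingCat.ofHom (Algebra.TensorProduct.map (AlgHom.id C C') δ).toRingHom := by
  apply po.hom_ext
  · rw [reassoc_of% hl, po'.inl_isoIsPushout_hom, po.inl_isoIsPushout_hom_assoc]
    ext
    simp
  · rw [reassoc_of% hr, po'.inr_isoIsPushout_hom, po.inr_isoIsPushout_hom_assoc]
    ext
    simp

theorem IsRingEqualizer.of_isPushout {C A D C' B D' : CommRingCat.{u}} {s : C ⟶ A} {d₁ d₂ : A ⟶ D}
    (hs : IsRingEqualizer s d₁ d₂) {c : C ⟶ C'} (hc : c.hom.Flat) {inl : C' ⟶ B} {inr : A ⟶ B}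
    (po : IsPushout c s inl inr) {inl' : C' ⟶ D'} {inr' : D ⟶ D'}
    (po' : IsPushout c (s ≫ d₁) inl' inr') {d₁' d₂' : B ⟶ D'}
    (hl₁ : inl ≫ d₁' = inl') (hr₁ : inr ≫ d₁' = d₁ ≫ inr')
    (hl₂ : inl ≫ d₂' = inl') (hr₂ : inr ≫ d₂' = d₂ ≫ inr') :
    IsRingEqualizer inl d₁' d₂' := by
  let _ := c.hom.toAlgebra
  let _ := s.hom.toAlgebra
  let _ := (s ≫ d₁).hom.toAlgebra
  have : Module.Flat C C' := hc
  let δ₁ : A →ₐ[C] D := { d₁.hom with commutes' := fun r => rfl }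
  let δ₂ : A →ₐ[C] D := { d₂.hom with commutes' := fun r => (congr($(hs.w) r)).symm }
  let eB := po.isoIsPushout _ _ (CommRingCat.isPushout_tensorProduct C C' A)
  let eD := po'.isoIsPushout _ _ (CommRingCat.isPushout_tensorProduct C C' D)
  have hinl (z) : eB.hom.hom (inl.hom z) = Algebra.TensorProduct.includeLeftRingHom z :=
    congr($(po.inl_isoIsPushout_hom _ _ (CommRingCat.isPushout_tensorProduct C C' A)) z)
  have hd₁ (b) : Algebra.TensorProduct.map (AlgHom.id C C') δ₁ (eB.hom.hom b) =
      eD.hom.hom (d₁'.hom b) := congr($(isoIsPushout_hom_comp_map δ₁ po po' hl₁ hr₁) b).symm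
  have hd₂ (b) : Algebra.TensorProduct.map (AlgHom.id C C') δ₂ (eB.hom.hom b) =
      eD.hom.hom (d₂'.hom b) := congr($(isoIsPushout_hom_comp_map δ₂ po po' hl₂ hr₂) b).symm
  refine ⟨hl₁.trans hl₂.symm, fun x y hxy => ?_, fun b hb => ?_⟩
  · refine Algebra.TensorProduct.includeLeft_injective (S := C') (B := A) hs.injective ?_
    exact (hinl x).symm.trans ((congrArg eB.hom.hom hxy).trans (hinl y))
  · obtain ⟨z, hz⟩ := mem_range_includeLeft_of_map_eq (C' := C') δ₁ δ₂ hs.mem_range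
      (eB.hom.hom b) (by rw [hd₁, hd₂, hb])
    exact ⟨z, eB.commRingCatIsoToRingEquiv.injective ((hinl z).trans hz)⟩

theorem IsRingEqualizer.exists_pushout {C A D C' : CommRingCat.{u}} {s : C ⟶ A} {d₁ d₂ : A ⟶ D}
    (hs : IsRingEqualizer s d₁ d₂) {c : C ⟶ C'} (hc : c.hom.Flat) :
    ∃ d₁' d₂' : pushout c s ⟶ pushout c (s ≫ d₁),
      (pushout.inl c s ≫ d₁' = pushout.inl c (s ≫ d₁) ∧
        pushout.inr c s ≫ d₁' = d₁ ≫ pushout.inr c (s ≫ d₁)) ∧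
      (pushout.inl c s ≫ d₂' = pushout.inl c (s ≫ d₁) ∧
        pushout.inr c s ≫ d₂' = d₂ ≫ pushout.inr c (s ≫ d₁)) ∧
      IsRingEqualizer (pushout.inl c s) d₁' d₂' := by
  have po := IsPushout.of_hasPushout c s
  have po' := IsPushout.of_hasPushout c (s ≫ d₁)
  have h₁ : c ≫ pushout.inl c (s ≫ d₁) = s ≫ d₁ ≫ pushout.inr c (s ≫ d₁) := by
    rw [po'.w, Category.assoc]
  have h₂ : c ≫ pushout.inl c (s ≫ d₁) = s ≫ d₂ ≫ pushout.inr c (s ≫ d₁) := by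
    rw [← Category.assoc s d₂ _, ← hs.w, po'.w]
  exact ⟨po.desc _ _ h₁, po.desc _ _ h₂, ⟨po.inl_desc _ _ _, po.inr_desc _ _ _⟩,
    ⟨po.inl_desc _ _ _, po.inr_desc _ _ _⟩, hs.of_isPushout hc po po' (po.inl_desc _ _ _)
      (po.inr_desc _ _ _) (po.inl_desc _ _ _) (po.inr_desc _ _ _)⟩

/-! ### Local equalizers -/

theorem exists_affine_refinement_of_flat {Y Y' : Scheme.{u}} (f : Y' ⟶ Y) [Flat f]
    {C : CommRingCat.{u}} (j : Spec C ⟶ Y) [IsOpenImmersion j] {y : Y'} (hy : f y ∈ Set.range j)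
    {O : Y'.Opens} (hyO : y ∈ O) :
    ∃ (C' : CommRingCat.{u}) (c : C ⟶ C') (j' : Spec C' ⟶ Y'), IsOpenImmersion j' ∧
      y ∈ Set.range j' ∧ Set.range j' ⊆ O ∧ c.hom.Flat ∧ Spec.map c ≫ j = j' ≫ f := by
  obtain ⟨V, hV, hyV, hVO⟩ := exists_isAffineOpen_mem_and_subset (x := y)
    (U := O ⊓ f ⁻¹ᵁ j.opensRange) ⟨hyO, hy⟩
  have hrange : Set.range hV.fromSpec = V := hV.range_fromSpec
  have hle : Set.range (hV.fromSpec ≫ f) ⊆ Set.range j := by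
    rintro _ ⟨z, rfl⟩
    exact (hVO (hrange.subset (Set.mem_range_self z))).2
  obtain ⟨c, hc⟩ := Spec.map_surjective (IsOpenImmersion.lift j (hV.fromSpec ≫ f) hle)
  have hcj : Spec.map c ≫ j = hV.fromSpec ≫ f := by rw [hc, IsOpenImmersion.lift_fac]
  have hpb : IsPullback (𝟙 _) (Spec.map c) (hV.fromSpec ≫ f) j :=
    .of_horiz_isIso_mono ⟨by rw [Category.id_comp, hcj]⟩
  have hflat : Flat (Spec.map c) := MorphismProperty.of_isPullback hpb inferInstance
  exact ⟨_, c, hV.fromSpec, inferInstance, hrange ▸ hyV, hrange ▸ fun z hz => (hVO hz).1,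
    Flat.SpecMap_iff.1 hflat, hcj⟩

/-- An affine open neighbourhood `Spec C` of `y` over which `φ` is `Spec A ⟶ Spec C`, where `C` is
the equalizer of two maps `A ⟶ D` induced by `r₁` and `r₂` on an affine `Spec D ⟶ R`. -/
structure EqualizerChart {R X Y : Scheme.{u}} (r₁ r₂ : R ⟶ X) (φ : X ⟶ Y) (y : Y) :
    Type (u + 1) where
  {C A D : CommRingCat.{u}}
  {s : C ⟶ A}
  {d₁ d₂ : A ⟶ D}
  base : Spec C ⟶ Y
  total : Spec A ⟶ X
  rel : Spec D ⟶ R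
  isOpenImmersion_base : IsOpenImmersion base
  mem_range_base : y ∈ Set.range base
  isPullback : IsPullback total (Spec.map s) φ base
  rel_comp₁ : rel ≫ r₁ = Spec.map d₁ ≫ total
  rel_comp₂ : rel ≫ r₂ = Spec.map d₂ ≫ total
  isRingEqualizer : IsRingEqualizer s d₁ d₂

/-- `φ` equalizes `r₁` and `r₂`, and locally on `Y` the functions on `Y` are the functions on `X`
equalized by `r₁` and `r₂`. -/
structure IsLocalEqualizer {R X Y : Scheme.{u}} (r₁ r₂ : R ⟶ X) (φ : X ⟶ Y) : Prop where
  w : r₁ ≫ φ = r₂ ≫ φ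
  nonempty_chart : ∀ y : Y, Nonempty (EqualizerChart r₁ r₂ φ y)

namespace IsLocalEqualizer

variable {R X Y : Scheme.{u}} {r₁ r₂ : R ⟶ X} {φ : X ⟶ Y}

theorem exists_chart_of_isPullback (hφ : IsLocalEqualizer r₁ r₂ φ) {R' X' Y' : Scheme.{u}}
    {fX : X' ⟶ X} {φ' : X' ⟶ Y'} {f : Y' ⟶ Y} [Flat f] (hpb : IsPullback fX φ' φ f)
    {fR : R' ⟶ R} {r₁' r₂' : R' ⟶ X'} (h₁ : r₁' ≫ fX = fR ≫ r₁) (h₂ : r₂' ≫ fX = fR ≫ r₂)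
    (w' : r₁' ≫ φ' = r₂' ≫ φ') (hR : IsPullback fR (r₁' ≫ φ') (r₁ ≫ φ) f) {y : Y'} {O : Y'.Opens}
    (hy : y ∈ O) :
    ∃ c : EqualizerChart r₁' r₂' φ' y, Set.range c.base ⊆ O := by
  obtain ⟨⟨j, i, l, _, hyj, pb, hl₁, hl₂, heq⟩⟩ := hφ.nonempty_chart (f y)
  rename_i C A D s d₁ d₂ _
  obtain ⟨C', c, j', _, hyj', hjO, hflat, hcj⟩ := exists_affine_refinement_of_flat f j hyj hy
  obtain ⟨d₁', d₂', ⟨hd₁l, hd₁r⟩, ⟨hd₂l, hd₂r⟩, heq'⟩ := heq.exists_pushout hflat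
  have hpbA : IsPullback (Spec.map (pushout.inr c s) ≫ i) (Spec.map (pushout.inl c s)) φ
      (j' ≫ f) := hcj ▸ (isPullback_SpecMap_pushout c s).flip.paste_horiz pb
  let i' := hpb.lift (Spec.map (pushout.inr c s) ≫ i) (Spec.map (pushout.inl c s) ≫ j')
    (by rw [hpbA.w, Category.assoc])
  have hi'X : i' ≫ fX = Spec.map (pushout.inr c s) ≫ i := hpb.lift_fst _ _ _
  have hi'Y : i' ≫ φ' = Spec.map (pushout.inl c s) ≫ j' := hpb.lift_snd _ _ _
  let l' := hR.lift (Spec.map (pushout.inr c (s ≫ d₁)) ≫ l) (Spec.map (pushout.inl c (s ≫ d₁)) ≫ j')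
    (by rw [Category.assoc, reassoc_of% hl₁, pb.w, Category.assoc, ← hcj,
      ← Spec.map_comp_assoc, ← Spec.map_comp_assoc, ← Spec.map_comp_assoc, pushout.condition,
      Category.assoc])
  have hl'R : l' ≫ fR = Spec.map (pushout.inr c (s ≫ d₁)) ≫ l := hR.lift_fst _ _ _
  have hl'Y : l' ≫ r₁' ≫ φ' = Spec.map (pushout.inl c (s ≫ d₁)) ≫ j' := hR.lift_snd _ _ _
  refine ⟨⟨j', i', l', inferInstance, hyj', IsPullback.of_right (hi'X ▸ hpbA) hi'Y hpb,
    hpb.hom_ext ?_ ?_, hpb.hom_ext ?_ ?_, heq'⟩, hjO⟩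
  · rw [Category.assoc, Category.assoc, hi'X, h₁, reassoc_of% hl'R, hl₁, ← Spec.map_comp_assoc,
      ← Spec.map_comp_assoc, hd₁r]
  · rw [Category.assoc, Category.assoc, hi'Y, hl'Y, ← Spec.map_comp_assoc, hd₁l]
  · rw [Category.assoc, Category.assoc, hi'X, h₂, reassoc_of% hl'R, hl₂, ← Spec.map_comp_assoc,
      ← Spec.map_comp_assoc, hd₂r]
  · rw [Category.assoc, Category.assoc, hi'Y, ← w', hl'Y, ← Spec.map_comp_assoc, hd₂l]

theorem of_isPullback (hφ : IsLocalEqualizer r₁ r₂ φ) {R' X' Y' : Scheme.{u}}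
    {fX : X' ⟶ X} {φ' : X' ⟶ Y'} {f : Y' ⟶ Y} [Flat f] (hpb : IsPullback fX φ' φ f)
    {fR : R' ⟶ R} {r₁' r₂' : R' ⟶ X'} (h₁ : r₁' ≫ fX = fR ≫ r₁) (h₂ : r₂' ≫ fX = fR ≫ r₂)
    (w' : r₁' ≫ φ' = r₂' ≫ φ') (hR : IsPullback fR (r₁' ≫ φ') (r₁ ≫ φ) f) :
    IsLocalEqualizer r₁' r₂' φ' :=
  ⟨w', fun _ => (hφ.exists_chart_of_isPullback hpb h₁ h₂ w' hR
    (TopologicalSpace.Opens.mem_top _)).nonempty⟩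

theorem exists_chart_subset (hφ : IsLocalEqualizer r₁ r₂ φ) {y : Y} {O : Y.Opens} (hy : y ∈ O) :
    ∃ c : EqualizerChart r₁ r₂ φ y, Set.range c.base ⊆ O :=
  hφ.exists_chart_of_isPullback (IsPullback.of_id_fst) (fR := 𝟙 R) (by simp) (by simp) hφ.w
    (IsPullback.of_id_fst) hy

end IsLocalEqualizer

theorem exists_specMap_comp_fromSpec {Z : Scheme.{u}} {W : Z.Opens} (hW : IsAffineOpen W)
    {C : CommRingCat.{u}} (a : Spec C ⟶ Z) (ha : Set.range a ⊆ W) :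
    ∃ α : Γ(Z, W) ⟶ C, Spec.map α ≫ hW.fromSpec = a := by
  have hrange : Set.range a ⊆ Set.range hW.fromSpec := by rwa [hW.range_fromSpec]
  obtain ⟨α, hα⟩ := Spec.map_surjective (IsOpenImmersion.lift hW.fromSpec a hrange)
  exact ⟨α, by rw [hα, IsOpenImmersion.lift_fac]⟩

theorem eq_of_specMap_comp_eq {C A : CommRingCat.{u}} {s : C ⟶ A} (hs : Function.Injective s.hom)
    {Z : Scheme.{u}} {W : Z.Opens} (hW : IsAffineOpen W) {a b : Spec C ⟶ Z}
    (ha : Set.range a ⊆ W) (hb : Set.range b ⊆ W) (h : Spec.map s ≫ a = Spec.map s ≫ b) :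
    a = b := by
  obtain ⟨α, rfl⟩ := exists_specMap_comp_fromSpec hW a ha
  obtain ⟨β, rfl⟩ := exists_specMap_comp_fromSpec hW b hb
  have : α ≫ s = β ≫ s := Spec.map_injective <| by
    rw [← cancel_mono hW.fromSpec, Spec.map_comp_assoc, Spec.map_comp_assoc, h]
  rw [show α = β from CommRingCat.hom_ext <| RingHom.ext fun x => hs congr($this x)]

theorem range_comp_subset_of_isPullback {P X V Y Z : Scheme.{u}} {m : P ⟶ X} {e : P ⟶ V}
    {φ : X ⟶ Y} {g : V ⟶ Y} (pb : IsPullback m e φ g) {u : X ⟶ Z} {W : Set Z}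
    (h : ∀ x, φ x ∈ Set.range g → u x ∈ W) : Set.range (m ≫ u) ⊆ W := by
  rintro _ ⟨z, rfl⟩
  refine h (m z) ⟨e z, ?_⟩
  rw [← Scheme.Hom.comp_apply, ← pb.w, Scheme.Hom.comp_apply]

namespace EqualizerChart

variable {R X Y : Scheme.{u}} {r₁ r₂ : R ⟶ X} {φ : X ⟶ Y}

theorem exists_desc {y : Y} (c : EqualizerChart r₁ r₂ φ y) {Z : Scheme.{u}} {u : X ⟶ Z}
    (hu : r₁ ≫ u = r₂ ≫ u) {W : Z.Opens} (hW : IsAffineOpen W)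
    (h : Set.range (c.total ≫ u) ⊆ W) : ∃ v : Spec c.C ⟶ Z, Spec.map c.s ≫ v = c.total ≫ u := by
  obtain ⟨w, hw⟩ := exists_specMap_comp_fromSpec hW _ h
  have hd : w ≫ c.d₁ = w ≫ c.d₂ := Spec.map_injective <| by
    rw [← cancel_mono hW.fromSpec, Spec.map_comp_assoc, Spec.map_comp_assoc, hw,
      ← reassoc_of% c.rel_comp₁, ← reassoc_of% c.rel_comp₂, hu]
  obtain ⟨v, hv⟩ := exists_comp_eq_of_injective c.isRingEqualizer.injective w
    fun x => c.isRingEqualizer.mem_range _ congr($hd x)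
  exact ⟨Spec.map v ≫ hW.fromSpec, by rw [← Spec.map_comp_assoc, hv, hw]⟩

/-- The open cover of `Y` by a chart around each of its points. -/
def openCover (c : ∀ y, EqualizerChart r₁ r₂ φ y) : Y.OpenCover where
  I₀ := Y
  X y := Spec (c y).C
  f y := (c y).base
  mem₀ := by
    rw [Scheme.presieve₀_mem_precoverage_iff]
    exact ⟨fun y => ⟨y, (c y).mem_range_base⟩, fun y => (c y).isOpenImmersion_base⟩

end EqualizerChart

namespace IsLocalEqualizer

variable {R X Y : Scheme.{u}} {r₁ r₂ : R ⟶ X} {φ : X ⟶ Y}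

theorem epi (hφ : IsLocalEqualizer r₁ r₂ φ) [Surjective φ] : Epi φ := by
  refine ⟨fun {Z} v v' h => ?_⟩
  have hchart : ∀ y, ∃ c : EqualizerChart r₁ r₂ φ y, c.base ≫ v = c.base ≫ v' := by
    intro y
    have hvv' : v y = v' y := by
      obtain ⟨x, rfl⟩ := φ.surjective y
      rw [← Scheme.Hom.comp_apply, h, Scheme.Hom.comp_apply]
    obtain ⟨W, hW, hyW, -⟩ := exists_isAffineOpen_mem_and_subset (x := v y) (U := ⊤) trivial
    obtain ⟨c, hc⟩ := hφ.exists_chart_subset (y := y) (O := v ⁻¹ᵁ W ⊓ v' ⁻¹ᵁ W)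
      ⟨hyW, (hvv' ▸ hyW : v' y ∈ W)⟩
    refine ⟨c, eq_of_specMap_comp_eq c.isRingEqualizer.injective hW ?_ ?_ ?_⟩
    · rintro _ ⟨z, rfl⟩
      exact (hc ⟨z, rfl⟩).1
    · rintro _ ⟨z, rfl⟩
      exact (hc ⟨z, rfl⟩).2
    · rw [← c.isPullback.w_assoc, ← c.isPullback.w_assoc, h]
  choose c hc using hchart
  exact Scheme.Cover.hom_ext (EqualizerChart.openCover c) _ _ hc

theorem exists_of_isPullback (hφ : IsLocalEqualizer r₁ r₂ φ) {X' Y' : Scheme.{u}}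
    {fX : X' ⟶ X} {φ' : X' ⟶ Y'} {f : Y' ⟶ Y} [Flat f] (hpb : IsPullback fX φ' φ f) :
    ∃ (R' : Scheme.{u}) (fR : R' ⟶ R) (r₁' r₂' : R' ⟶ X'), r₁' ≫ fX = fR ≫ r₁ ∧
      r₂' ≫ fX = fR ≫ r₂ ∧ IsLocalEqualizer r₁' r₂' φ' := by
  let fR : pullback (r₁ ≫ φ) f ⟶ R := pullback.fst _ _
  let g : pullback (r₁ ≫ φ) f ⟶ Y' := pullback.snd _ _
  have hg : fR ≫ r₁ ≫ φ = g ≫ f := pullback.condition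
  let r₁' := hpb.lift (fR ≫ r₁) g (by rw [Category.assoc, hg])
  let r₂' := hpb.lift (fR ≫ r₂) g (by rw [Category.assoc, ← hφ.w, hg])
  have h₁ : r₁' ≫ fX = fR ≫ r₁ := hpb.lift_fst _ _ _
  have h₂ : r₂' ≫ fX = fR ≫ r₂ := hpb.lift_fst _ _ _
  have hg₁ : r₁' ≫ φ' = g := hpb.lift_snd _ _ _
  have w' : r₁' ≫ φ' = r₂' ≫ φ' := hg₁.trans (hpb.lift_snd _ _ _).symm
  exact ⟨_, fR, r₁', r₂', h₁, h₂,
    hφ.of_isPullback hpb h₁ h₂ w' (hg₁ ▸ .of_hasPullback (r₁ ≫ φ) f)⟩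

theorem epi_snd (hφ : IsLocalEqualizer r₁ r₂ φ) [Surjective φ] {Y' : Scheme.{u}} (f : Y' ⟶ Y)
    [Flat f] : Epi (pullback.snd φ f) := by
  obtain ⟨_, _, _, _, _, _, h⟩ := hφ.exists_of_isPullback (.of_hasPullback φ f)
  exact h.epi

theorem exists_desc_of_openCover (hφ : IsLocalEqualizer r₁ r₂ φ) [Surjective φ] (𝒰 : Y.OpenCover)
    {Z : Scheme.{u}} {u : X ⟶ Z} (v : ∀ i, 𝒰.X i ⟶ Z)
    (hv : ∀ i, pullback.snd φ (𝒰.f i) ≫ v i = pullback.fst φ (𝒰.f i) ≫ u) :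
    ∃ v : Y ⟶ Z, φ ≫ v = u := by
  have hcomp (i) {P : Scheme.{u}} (a : P ⟶ X) (b : P ⟶ 𝒰.X i) (h : a ≫ φ = b ≫ 𝒰.f i) :
      b ≫ v i = a ≫ u := by
    rw [← pullback.lift_snd _ _ h, Category.assoc, hv, pullback.lift_fst_assoc]
  have hcompat (i j) : pullback.fst (𝒰.f i) (𝒰.f j) ≫ v i = pullback.snd (𝒰.f i) (𝒰.f j) ≫ v j := by
    have := hφ.epi_snd (pullback.fst (𝒰.f i) (𝒰.f j) ≫ 𝒰.f i)
    rw [← cancel_epi (pullback.snd φ (pullback.fst (𝒰.f i) (𝒰.f j) ≫ 𝒰.f i)),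
      ← Category.assoc, ← Category.assoc, hcomp i (pullback.fst _ _), hcomp j (pullback.fst _ _)]
    · rw [Category.assoc, ← pullback.condition]
      exact pullback.condition
    · rw [Category.assoc]
      exact pullback.condition
  refine ⟨𝒰.glueMorphisms v hcompat, Scheme.Cover.hom_ext (𝒰.pullback₁ φ) _ _ fun (i : 𝒰.I₀) => ?_⟩
  refine (pullback.condition_assoc _).trans (Eq.trans ?_ (hv i))
  exact congrArg (_ ≫ ·) (𝒰.ι_glueMorphisms v hcompat i)

theorem existsUnique_desc (hφ : IsLocalEqualizer r₁ r₂ φ) [Surjective φ] (hclosed : IsClosedMap φ)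
    (hinj : Function.Injective φ) {Z : Scheme.{u}} {u : X ⟶ Z} (hu : r₁ ≫ u = r₂ ≫ u) :
    ∃! v : Y ⟶ Z, φ ≫ v = u := by
  have hchart : ∀ y, ∃ (c : EqualizerChart r₁ r₂ φ y) (v : Spec c.C ⟶ Z),
      Spec.map c.s ≫ v = c.total ≫ u := by
    intro y
    obtain ⟨x, rfl⟩ := φ.surjective y
    obtain ⟨W, hW, hxW, -⟩ := exists_isAffineOpen_mem_and_subset (x := u x) (U := ⊤) trivial
    -- As `φ` is a closed bijection, this is an open neighbourhood of `φ x` with preimage `u ⁻¹ᵁ W`.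
    let O : Y.Opens := ⟨(φ '' (u ⁻¹ᵁ W : X.Opens)ᶜ)ᶜ,
      (hclosed _ (u ⁻¹ᵁ W).isOpen.isClosed_compl).isOpen_compl⟩
    have hO (z : X) (hz : φ z ∈ O) : u z ∈ W := by
      by_contra h
      exact hz ⟨z, h, rfl⟩
    have hxO : φ x ∈ O := by
      rintro ⟨z, hz, hzx⟩
      exact hz (hinj hzx ▸ hxW)
    obtain ⟨c, hc⟩ := hφ.exists_chart_subset hxO
    exact ⟨c, c.exists_desc hu hW
      (range_comp_subset_of_isPullback c.isPullback fun z hz => hO z (hc hz))⟩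
  choose c v hv using hchart
  have hv' (y : Y) : pullback.snd φ (c y).base ≫ v y = pullback.fst φ (c y).base ≫ u := by
    rw [← cancel_epi (c y).isPullback.isoPullback.hom, (c y).isPullback.isoPullback_hom_snd_assoc,
      (c y).isPullback.isoPullback_hom_fst_assoc, hv]
  have := hφ.epi
  obtain ⟨w, hw⟩ := hφ.exists_desc_of_openCover (EqualizerChart.openCover c) v hv'
  exact ⟨w, hw, fun w' hw' => (cancel_epi φ).1 (hw'.trans hw.symm)⟩

end IsLocalEqualizer

/-- `φ` is the quotient of `X` by the relation `r₁, r₂ : R ⟶ X`, and remains one after every flat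
base change of `Y`. Invariance under the pulled back relation is expressed on points. -/
structure IsFlatStableQuotient {R X Y : Scheme.{u}} (r₁ r₂ : R ⟶ X) (φ : X ⟶ Y) : Prop where
  w : r₁ ≫ φ = r₂ ≫ φ
  existsUnique_desc : ∀ {X' Y' Z : Scheme.{u}} {fX : X' ⟶ X} {φ' : X' ⟶ Y'} {f : Y' ⟶ Y} [Flat f],
    IsPullback fX φ' φ f → ∀ u : X' ⟶ Z,
    (∀ {S : Scheme.{u}} (a b : S ⟶ X') (ρ : S ⟶ R), a ≫ φ' = b ≫ φ' → a ≫ fX = ρ ≫ r₁ →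
      b ≫ fX = ρ ≫ r₂ → a ≫ u = b ≫ u) → ∃! v : Y' ⟶ Z, φ' ≫ v = u

theorem IsLocalEqualizer.isFlatStableQuotient {R X Y : Scheme.{u}} {r₁ r₂ : R ⟶ X} {φ : X ⟶ Y}
    (hφ : IsLocalEqualizer r₁ r₂ φ) [Surjective φ] [UniversallyClosed φ] [UniversallyInjective φ] :
    IsFlatStableQuotient r₁ r₂ φ := by
  refine ⟨hφ.w, fun {X' Y' Z fX φ' f} _ hpb u hu => ?_⟩
  have : Surjective φ' := MorphismProperty.of_isPullback hpb ‹Surjective φ›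
  have : UniversallyClosed φ' := MorphismProperty.of_isPullback hpb ‹UniversallyClosed φ›
  have : UniversallyInjective φ' := MorphismProperty.of_isPullback hpb ‹UniversallyInjective φ›
  obtain ⟨_, fR, r₁', r₂', h₁, h₂, hφ'⟩ := hφ.exists_of_isPullback hpb
  exact hφ'.existsUnique_desc φ'.isClosedMap φ'.injective (hu r₁' r₂' fR hφ'.w h₁ h₂)

/-! ### Functions invariant under a relation -/

theorem IsRingEqualizer.of_isLimit {C A D : CommRingCat.{u}} {s : C ⟶ A} {d₁ d₂ : A ⟶ D}
    {w : s ≫ d₁ = s ≫ d₂} (hs : IsLimit (Fork.ofι s w)) : IsRingEqualizer s d₁ d₂ where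
  w := w
  injective := by
    have : Mono s := mono_of_isLimit_fork hs
    exact ConcreteCategory.injective_of_mono_of_preservesPullback s
  mem_range a ha := by
    let i : CommRingCat.of (d₁.hom.eqLocus d₂.hom) ⟶ A :=
      CommRingCat.ofHom (d₁.hom.eqLocus d₂.hom).subtype
    have hi : i ≫ d₁ = i ≫ d₂ := CommRingCat.hom_ext (RingHom.ext fun x => x.2)
    obtain ⟨l, hl⟩ := Fork.IsLimit.lift' hs i hi
    exact ⟨l.hom ⟨a, ha⟩, congr($hl ⟨a, ha⟩)⟩

theorem IsRingEqualizer.isUnit_of_isUnit_map {C A D : CommRingCat.{u}} {s : C ⟶ A}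
    {d₁ d₂ : A ⟶ D} (h : IsRingEqualizer s d₁ d₂) {c : C} (hc : IsUnit (s.hom c)) : IsUnit c := by
  obtain ⟨b, hb⟩ := hc.exists_right_inv
  have hb₁ : d₁.hom b * d₁.hom (s.hom c) = 1 := by rw [← map_mul, mul_comm, hb, map_one]
  have hb₂ : d₁.hom (s.hom c) * d₂.hom b = 1 := by
    rw [show d₁.hom (s.hom c) = d₂.hom (s.hom c) from congr($h.w c), ← map_mul, hb, map_one]
  obtain ⟨b', rfl⟩ := h.mem_range b (left_inv_eq_right_inv hb₁ hb₂)
  exact .of_mul_eq_one b' (h.injective (by rw [map_mul, hb, map_one]))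

theorem IsRingEqualizer.isLocalization_away {C A D C' A' D' : CommRingCat.{u}} {s : C ⟶ A}
    {d₁ d₂ : A ⟶ D} {s' : C' ⟶ A'} {d₁' d₂' : A' ⟶ D'} (h : IsRingEqualizer s d₁ d₂)
    (h' : IsRingEqualizer s' d₁' d₂') {ρC : C ⟶ C'} {ρA : A ⟶ A'} {ρD : D ⟶ D'}
    (hs : ρC ≫ s' = s ≫ ρA) (hd₁ : d₁ ≫ ρD = ρA ≫ d₁') (hd₂ : d₂ ≫ ρD = ρA ≫ d₂') (c : C)
    (hA : letI := ρA.hom.toAlgebra; IsLocalization.Away (s.hom c) A')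
    (hD : letI := ρD.hom.toAlgebra; IsLocalization.Away (d₁.hom (s.hom c)) D') :
    letI := ρC.hom.toAlgebra; IsLocalization.Away c C' := by
  let _ := ρC.hom.toAlgebra
  let _ := ρA.hom.toAlgebra
  let _ := ρD.hom.toAlgebra
  have hsx (x : C) : s'.hom (ρC.hom x) = ρA.hom (s.hom x) := congr($hs x)
  have hwc : d₁.hom (s.hom c) = d₂.hom (s.hom c) := congr($h.w c)
  have hwc' : d₁'.hom (ρA.hom (s.hom c)) = d₂'.hom (ρA.hom (s.hom c)) := by
    rw [← hsx]
    exact congr($h'.w (ρC.hom c))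
  refine IsLocalization.Away.mk c (h'.isUnit_of_isUnit_map ?_) (fun x => ?_) fun x y hxy => ?_
  · exact (hsx c).symm ▸ IsLocalization.Away.algebraMap_isUnit (S := A') (s.hom c)
  · obtain ⟨m, a, ha⟩ := IsLocalization.Away.surj (s.hom c) (s'.hom x)
    have ha' : ρD.hom (d₁.hom a) = ρD.hom (d₂.hom a) := by
      rw [show ρD.hom (d₁.hom a) = d₁'.hom (ρA.hom a) from congr($hd₁ a),
        show ρD.hom (d₂.hom a) = d₂'.hom (ρA.hom a) from congr($hd₂ a),
        show ρA.hom a = _ from ha.symm, map_mul, map_mul, map_pow, map_pow,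
        show d₁'.hom (s'.hom x) = d₂'.hom (s'.hom x) from congr($h'.w x)]
      exact congrArg (fun z => _ * z ^ m) hwc'
    obtain ⟨N, hN⟩ := IsLocalization.Away.exists_of_eq (d₁.hom (s.hom c)) ha'
    obtain ⟨b, hb⟩ := h.mem_range (s.hom c ^ N * a) (by
      rw [map_mul, map_mul, map_pow, map_pow, hN, hwc])
    refine ⟨m + N, b, h'.injective ?_⟩
    change s'.hom (x * ρC.hom c ^ (m + N)) = s'.hom (ρC.hom b)
    rw [hsx, hb, map_mul, map_mul, map_pow, map_pow, hsx, show ρA.hom a = _ from ha.symm,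
      RingHom.algebraMap_toAlgebra]
    ring
  · have hρ : ρA.hom (s.hom x) = ρA.hom (s.hom y) := by
      rw [← hsx, ← hsx]
      exact congrArg s'.hom hxy
    obtain ⟨N, hN⟩ := IsLocalization.Away.exists_of_eq (S := A') (s.hom c) hρ
    exact ⟨N, h.injective (by simpa only [map_mul, map_pow] using hN)⟩

/-- Pullback of functions along `r`, as a map of presheaves of rings on `S`. -/
def pullbackSections {R X S : Scheme.{u}} {f : X ⟶ S} {g : R ⟶ S} (r : R ⟶ X) (h : r ≫ f = g) :
    (TopologicalSpace.Opens.map f.base).op ⋙ X.presheaf ⟶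
      (TopologicalSpace.Opens.map g.base).op ⋙ R.presheaf where
  app U := r.appLE (f ⁻¹ᵁ U.unop) (g ⁻¹ᵁ U.unop) (by rw [← h]; rfl)
  naturality {U V} i := (r.map_appLE _ _).trans (r.appLE_map _ _).symm

section Invariants

open Scheme.AffineZariskiSite

variable {R X S : Scheme.{u}} (f : X ⟶ S) {g : R ⟶ S} {r₁ r₂ : R ⟶ X}

theorem isLocalization_away_pushforward [IsAffineHom f] (U : S.AffineZariskiSite) (a : Γ(S, U.1)) :
    letI := (X.presheaf.map (homOfLE (f.preimage_mono (S.basicOpen_le a))).op).hom.toAlgebra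
    IsLocalization.Away ((f.app U.1).hom a) Γ(X, f ⁻¹ᵁ S.basicOpen a) :=
  (U.2.preimage f).isLocalization_of_eq_basicOpen _ _ (Scheme.preimage_basicOpen ..)

variable {f} (h₁ : r₁ ≫ f = g) (h₂ : r₂ ≫ f = g)

theorem c_comp_pullbackSections : f.c ≫ pullbackSections r₁ h₁ = f.c ≫ pullbackSections r₂ h₂ := by
  refine NatTrans.ext (funext fun U => ?_)
  change f.app _ ≫ r₁.appLE _ _ _ = f.app _ ≫ r₂.appLE _ _ _
  simp only [Scheme.Hom.app_eq_appLE, Scheme.Hom.appLE_comp_appLE, h₁, h₂]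

/-- The presheaf on `S` of functions on `X` which are invariant under the relation `r₁, r₂`. -/
abbrev invariantsPresheaf : S.Opensᵒᵖ ⥤ CommRingCat.{u} :=
  equalizer (pullbackSections r₁ h₁) (pullbackSections r₂ h₂)

/-- Functions on `S` are invariant functions on `X`. -/
abbrev toInvariants : S.presheaf ⟶ invariantsPresheaf h₁ h₂ :=
  equalizer.lift f.c (c_comp_pullbackSections h₁ h₂)

theorem isRingEqualizer_invariants (U : S.Opensᵒᵖ) :
    IsRingEqualizer ((equalizer.ι (pullbackSections r₁ h₁) (pullbackSections r₂ h₂)).app U)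
      ((pullbackSections r₁ h₁).app U) ((pullbackSections r₂ h₂).app U) :=
  .of_isLimit (isLimitForkMapOfIsLimit ((evaluation _ _).obj U) _ (equalizerIsEqualizer _ _))

theorem toInvariants_app_comp (U : S.Opens) :
    (toInvariants h₁ h₂).app (op U) ≫
      (equalizer.ι (pullbackSections r₁ h₁) (pullbackSections r₂ h₂)).app (op U) = f.app U :=
  congr(NatTrans.app $(equalizer.lift_ι f.c (c_comp_pullbackSections h₁ h₂)) (op U))

theorem coequifibered_toInvariants [IsAffineHom f] [IsAffineHom g] :
    ((toOpensFunctor S).op.whiskerLeft (toInvariants h₁ h₂)).Coequifibered := by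
  refine coequifibered_iff_forall_isLocalizationAway.mpr fun U a => ?_
  have happ : f.app U.1 ≫ (pullbackSections r₁ h₁).app (op U.1) = g.app U.1 := by
    subst h₁
    simp only [pullbackSections, Scheme.Hom.app_eq_appLE, Scheme.Hom.appLE_comp_appLE]
  have hD := isLocalization_away_pushforward g U a
  have hA := isLocalization_away_pushforward f U a
  rw [← happ, ← toInvariants_app_comp h₁ h₂] at hD
  rw [← toInvariants_app_comp h₁ h₂] at hA
  have i : op U.1 ⟶ op (S.basicOpen a) := (homOfLE (S.basicOpen_le a)).op
  exact (isRingEqualizer_invariants h₁ h₂ (op U.1)).isLocalization_away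
    (isRingEqualizer_invariants h₁ h₂ (op (S.basicOpen a)))
    (NatTrans.naturality _ i) ((pullbackSections r₁ h₁).naturality i).symm
    ((pullbackSections r₂ h₂).naturality i).symm _ hA hD

end Invariants

/-! ### Relative spectra of invariants -/

section RelativeSpec

open Scheme.AffineZariskiSite

theorem range_of_isPullback {P X Y Z : Scheme.{u}} {fst : P ⟶ X} {snd : P ⟶ Y} {f : X ⟶ Z}
    {g : Y ⟶ Z} (h : IsPullback fst snd f g) : Set.range fst = f ⁻¹' Set.range g := by
  simpa using Scheme.image_preimage_eq_of_isPullback h.flip Set.univ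

theorem exists_relativeSpec {S : Scheme.{u}} {F : S.Opensᵒᵖ ⥤ CommRingCat.{u}} (α : S.presheaf ⟶ F)
    (H : ((toOpensFunctor S).op.whiskerLeft α).Coequifibered) :
    ∃ (Y : Scheme.{u}) (π : Y ⟶ S) (j : ∀ U : S.AffineZariskiSite, Spec (F.obj (op U.1)) ⟶ Y),
      IsAffineHom π ∧
      (∀ U, IsPullback (j U) (Spec.map (α.app (op U.1))) π U.2.fromSpec) ∧
      ∀ {U V : S.AffineZariskiSite} (i : U ⟶ V),
        Spec.map (F.map ((toOpensFunctor S).map i).op) ≫ j V = j U := by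
  let d := relativeGluingData H
  have : (d.functor ⋙ Scheme.forget).IsLocallyDirected :=
    Scheme.Cover.RelativeGluingData.instIsLocallyDirectedI₀CompFunctorForgetOfIsThin ..
  have hpb (U : S.AffineZariskiSite) : IsPullback (colimit.ι d.functor U)
      (Spec.map (α.app (op U.1))) d.toBase U.2.fromSpec := by
    have hspec : (Spec.map (α.app (op U.1)) ≫ U.2.isoSpec.inv) ≫ U.2.isoSpec.hom =
        Spec.map (α.app (op U.1)) := by rw [Category.assoc, Iso.inv_hom_id, Category.comp_id]
    refine (d.isPullback_natTrans_ι_toBase U).flip.of_iso (Iso.refl _) (Iso.refl _) U.2.isoSpec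
      (Iso.refl _) ?_ ?_ ?_ ?_
    · exact (Category.comp_id _).trans (Category.id_comp _).symm
    · exact hspec.trans (Category.id_comp _).symm
    · exact (Category.comp_id _).trans (Category.id_comp _).symm
    · exact (Category.comp_id _).trans U.2.isoSpec_hom_fromSpec.symm
  refine ⟨d.glued, d.toBase, fun U => colimit.ι d.functor U, ⟨fun U hU => ?_⟩, hpb,
    colimit.w d.functor⟩
  let j : Spec (F.obj (op U)) ⟶ d.glued := colimit.ι d.functor ⟨U, hU⟩
  have hj : IsPullback j _ d.toBase hU.fromSpec := hpb ⟨U, hU⟩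
  have : IsOpenImmersion j := MorphismProperty.of_isPullback hj.flip inferInstance
  have hrange : j.opensRange = d.toBase ⁻¹ᵁ U :=
    TopologicalSpace.Opens.ext ((range_of_isPullback hj).trans (by rw [hU.range_fromSpec]; rfl))
  exact hrange ▸ isAffineOpen_opensRange j

theorem exists_hom_of_affineZariskiSite {X S Y : Scheme.{u}} (f : X ⟶ S) [IsAffineHom f]
    (m : ∀ U : S.AffineZariskiSite, Spec Γ(X, f ⁻¹ᵁ U.1) ⟶ Y)
    (hm : ∀ {U V : S.AffineZariskiSite} (i : U ⟶ V),
      Spec.map (X.presheaf.map (homOfLE (f.preimage_mono (toOpens_mono i.le))).op) ≫ m V = m U) :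
    ∃ φ : X ⟶ Y, ∀ U : S.AffineZariskiSite, (U.2.preimage f).fromSpec ≫ φ = m U := by
  let e (U : S.AffineZariskiSite) := pullbackRestrictIsoRestrict f U.1
  have he (U : S.AffineZariskiSite) : (e U).hom ≫ (f ⁻¹ᵁ U.1).ι = pullback.fst f U.1.ι :=
    pullbackRestrictIsoRestrict_hom_ι ..
  let t {U V : S.AffineZariskiSite} (i : U ⟶ V) : pullback f U.1.ι ⟶ pullback f V.1.ι :=
    Scheme.Cover.trans ((directedCover S).pullback₁ f) i
  have ht {U V : S.AffineZariskiSite} (i : U ⟶ V) : t i ≫ (e V).hom =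
      (e U).hom ≫ X.homOfLE (f.preimage_mono (toOpens_mono i.le)) := by
    rw [← cancel_mono (Scheme.Opens.ι _), Category.assoc, Category.assoc, he, Scheme.homOfLE_ι, he]
    exact Scheme.Cover.trans_map ((directedCover S).pullback₁ f) i
  let g (U : S.AffineZariskiSite) : pullback f U.1.ι ⟶ Y :=
    (e U).hom ≫ (f ⁻¹ᵁ U.1).toSpecΓ ≫ m U
  have hg {U V : S.AffineZariskiSite} (i : U ⟶ V) : t i ≫ g V = g U := by
    simp only [g]
    rw [reassoc_of% ht, ← Scheme.Opens.toSpecΓ_SpecMap_presheaf_map_assoc, hm i]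
  let φ : X ⟶ Y :=
    Scheme.OpenCover.glueMorphismsOfLocallyDirected ((directedCover S).pullback₁ f) g hg
  have hφ (U : S.AffineZariskiSite) : pullback.fst f U.1.ι ≫ φ = g U :=
    Scheme.OpenCover.map_glueMorphismsOfLocallyDirected ((directedCover S).pullback₁ f) g hg U
  refine ⟨φ, fun U => ?_⟩
  have hU : (e U).hom ≫ (f ⁻¹ᵁ U.1).ι ≫ φ = (e U).hom ≫ (f ⁻¹ᵁ U.1).toSpecΓ ≫ m U := by
    rw [reassoc_of% he, hφ]
  rw [IsAffineOpen.fromSpec, Category.assoc, Iso.inv_comp_eq, IsAffineOpen.isoSpec_hom]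
  exact (cancel_epi _).mp hU

theorem isPullback_fromSpec_preimage {X S : Scheme.{u}} (f : X ⟶ S) [IsAffineHom f] {U : S.Opens}
    (hU : IsAffineOpen U) :
    IsPullback (hU.preimage f).fromSpec (Spec.map (f.app U)) f hU.fromSpec := by
  have w : (hU.preimage f).fromSpec ≫ f = Spec.map (f.app U) ≫ hU.fromSpec := by
    rw [Scheme.Hom.app_eq_appLE, IsAffineOpen.SpecMap_appLE_fromSpec]
  refine (IsOpenImmersion.isPullback _ _ _ _ w ?_).flip
  ext1
  simp only [Scheme.Hom.coe_opensRange, Scheme.Hom.coe_preimage, IsAffineOpen.range_fromSpec]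

theorem hom_ext_of_affineZariskiSite {X S Y : Scheme.{u}} (f : X ⟶ S) [IsAffineHom f]
    {a b : X ⟶ Y} (h : ∀ U : S.AffineZariskiSite,
      (U.2.preimage f).fromSpec ≫ a = (U.2.preimage f).fromSpec ≫ b) : a = b := by
  refine Scheme.Cover.hom_ext
    (X.openCoverOfIsOpenCover _ (.comap (iSup_affineOpens_eq_top S) f.base.1)) _ _ fun U => ?_
  have := h U
  rw [IsAffineOpen.fromSpec, Category.assoc, Category.assoc, Iso.cancel_iso_inv_left] at this
  exact this

section InvariantsQuotient

variable {R X S : Scheme.{u}} {r₁ r₂ : R ⟶ X} {f : X ⟶ S} {g : R ⟶ S}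

theorem fromSpec_preimage_comp [IsAffineHom f] [IsAffineHom g] {r : R ⟶ X} (h : r ≫ f = g)
    (U : S.AffineZariskiSite) : (U.2.preimage g).fromSpec ≫ r =
      Spec.map ((pullbackSections r h).app (op U.1)) ≫ (U.2.preimage f).fromSpec :=
  (IsAffineOpen.SpecMap_appLE_fromSpec ..).symm

theorem specMap_presheaf_map_comp_equalizer_ι (h₁ : r₁ ≫ f = g) (h₂ : r₂ ≫ f = g)
    {U V : S.AffineZariskiSite} (i : U ⟶ V) :
    Spec.map (X.presheaf.map (homOfLE (f.preimage_mono (toOpens_mono i.le))).op) ≫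
        Spec.map ((equalizer.ι (pullbackSections r₁ h₁) (pullbackSections r₂ h₂)).app (op V.1)) =
      Spec.map ((equalizer.ι (pullbackSections r₁ h₁) (pullbackSections r₂ h₂)).app (op U.1)) ≫
        Spec.map ((invariantsPresheaf h₁ h₂).map ((toOpensFunctor S).map i).op) := by
  refine (Spec.map_comp _ _).symm.trans ((congrArg Spec.map ?_).trans (Spec.map_comp _ _))
  exact (NatTrans.naturality _ ((toOpensFunctor S).map i).op).symm

theorem exists_isLocalEqualizer_of_isAffineHom [IsAffineHom f] [IsAffineHom g]
    (h₁ : r₁ ≫ f = g) (h₂ : r₂ ≫ f = g) : ∃ (Y : Scheme.{u}) (φ : X ⟶ Y) (π : Y ⟶ S),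
      φ ≫ π = f ∧ IsAffineHom π ∧ IsLocalEqualizer r₁ r₂ φ := by
  obtain ⟨Y, π, j, hπ, hj, hj_comp⟩ :=
    exists_relativeSpec (toInvariants h₁ h₂) (coequifibered_toInvariants h₁ h₂)
  let s (U : S.AffineZariskiSite) :=
    (equalizer.ι (pullbackSections r₁ h₁) (pullbackSections r₂ h₂)).app (op U.1)
  obtain ⟨φ, hφ⟩ := exists_hom_of_affineZariskiSite f (fun U => Spec.map (s U) ≫ j U)
    fun {U V} i => by
      rw [← hj_comp i, reassoc_of% specMap_presheaf_map_comp_equalizer_ι h₁ h₂ i]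
      exact Category.assoc ..
  have hs (U : S.AffineZariskiSite) : (toInvariants h₁ h₂).app (op U.1) ≫ s U = f.app U.1 :=
    toInvariants_app_comp h₁ h₂ U.1
  have hφπ : φ ≫ π = f := hom_ext_of_affineZariskiSite f fun U => by
    rw [reassoc_of% hφ U, (hj U).w, (isPullback_fromSpec_preimage f U.2).w, ← hs,
      Spec.map_comp_assoc]
  refine ⟨Y, φ, π, hφπ, hπ, hom_ext_of_affineZariskiSite g fun U => ?_, fun y => ?_⟩
  · rw [reassoc_of% fromSpec_preimage_comp h₁ U,
      reassoc_of% fromSpec_preimage_comp h₂ U, hφ, ← Spec.map_comp_assoc,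
      ← Spec.map_comp_assoc, (isRingEqualizer_invariants h₁ h₂ (op U.1)).w]
  · obtain ⟨U, hU, hyU, -⟩ := exists_isAffineOpen_mem_and_subset (x := π y) (U := ⊤) trivial
    refine ⟨j ⟨U, hU⟩, (hU.preimage f).fromSpec, (hU.preimage g).fromSpec,
      MorphismProperty.of_isPullback (hj ⟨U, hU⟩).flip inferInstance, ?_,
      .of_bot ?_ (hφ ⟨U, hU⟩) (hj ⟨U, hU⟩), fromSpec_preimage_comp h₁ ⟨U, hU⟩,
      fromSpec_preimage_comp h₂ ⟨U, hU⟩, isRingEqualizer_invariants h₁ h₂ (op U)⟩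
    · rw [range_of_isPullback (hj ⟨U, hU⟩), hU.range_fromSpec]
      exact hyU
    · rw [hφπ, ← Spec.map_comp, hs ⟨U, hU⟩]
      exact isPullback_fromSpec_preimage f hU

end InvariantsQuotient

end RelativeSpec

/-! ### Flat stable quotients -/

theorem universallyInjective_of_comp {X Y Z : Scheme.{u}} (f : X ⟶ Y) (g : Y ⟶ Z)
    [h : UniversallyInjective (f ≫ g)] : UniversallyInjective f := by
  refine ((tfae_universallyInjective f).out 0 1).2 ?_
  intro K _
  have hfg : ∀ (K : Type u) [Field K],
      Function.Injective fun a : Spec (.of K) ⟶ X => a ≫ f ≫ g :=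
    ((tfae_universallyInjective (f ≫ g)).out 0 1).1 h
  exact .of_comp (f := fun b => b ≫ g)
    (by simpa only [Function.comp_def, Category.assoc] using hfg K)

theorem IsLocalEqualizer.surjective {R X Y : Scheme.{u}} {r₁ r₂ : R ⟶ X} {φ : X ⟶ Y}
    (hφ : IsLocalEqualizer r₁ r₂ φ) [IsIntegralHom φ] : Surjective φ := by
  refine ⟨fun y => ?_⟩
  obtain ⟨c⟩ := hφ.nonempty_chart y
  have hs : IsIntegralHom (Spec.map c.s) := MorphismProperty.of_isPullback c.isPullback ‹_›
  obtain ⟨z, hz⟩ := c.mem_range_base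
  obtain ⟨w, rfl⟩ := (IsIntegralHom.SpecMap_iff.1 hs).comap_surjective
    c.isRingEqualizer.injective z
  exact ⟨c.total w, congr($(c.isPullback.w) w).trans hz⟩

theorem exists_isFlatStableQuotient {R X S : Scheme.{u}} {r₁ r₂ : R ⟶ X} {f : X ⟶ S} {g : R ⟶ S}
    [IsIntegralHom f] [UniversallyInjective f] [IsAffineHom g] (h₁ : r₁ ≫ f = g)
    (h₂ : r₂ ≫ f = g) : ∃ (Y : Scheme.{u}) (φ : X ⟶ Y), IsFlatStableQuotient r₁ r₂ φ := by
  obtain ⟨Y, φ, π, rfl, _, hφ⟩ := exists_isLocalEqualizer_of_isAffineHom h₁ h₂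
  have : IsIntegralHom φ := .of_comp φ π
  have := universallyInjective_of_comp φ π
  have := hφ.surjective
  exact ⟨Y, φ, hφ.isFlatStableQuotient⟩

/-- Morphisms that remain epimorphisms after every flat base change. -/
def IsFlatStablyEpi {X Y : Scheme.{u}} (f : X ⟶ Y) : Prop :=
  ∀ ⦃X' Y' : Scheme.{u}⦄ ⦃fX : X' ⟶ X⦄ ⦃f' : X' ⟶ Y'⦄ ⦃g : Y' ⟶ Y⦄ [Flat g],
    IsPullback fX f' f g → Epi f'

namespace IsFlatStablyEpi

variable {X Y Z : Scheme.{u}} {f : X ⟶ Y} {g : Y ⟶ Z}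

theorem epi (hf : IsFlatStablyEpi f) : Epi f :=
  hf (IsPullback.of_id_fst (f := f))

theorem of_isPullback (hf : IsFlatStablyEpi f) {X' Y' : Scheme.{u}} {fX : X' ⟶ X} {f' : X' ⟶ Y'}
    {b : Y' ⟶ Y} [Flat b] (hpb : IsPullback fX f' f b) : IsFlatStablyEpi f' :=
  fun _ _ _ _ _ _ hpb' => hf (hpb'.paste_horiz hpb)

theorem comp (hf : IsFlatStablyEpi f) (hg : IsFlatStablyEpi g) : IsFlatStablyEpi (f ≫ g) := by
  intro X' Z' fX h' b _ hpb
  let fY := pullback.fst g b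
  let g' := pullback.snd g b
  have hpbg : IsPullback fY g' g b := .of_hasPullback g b
  have : Flat fY := MorphismProperty.of_isPullback hpbg.flip ‹Flat b›
  have hw : (fX ≫ f) ≫ g = h' ≫ b := (Category.assoc ..).trans hpb.w
  let f' : X' ⟶ pullback g b := hpbg.lift (fX ≫ f) h' hw
  have hpbf : IsPullback fX f' f fY :=
    .of_bot (by rwa [hpbg.lift_snd]) (hpbg.lift_fst _ _ hw).symm hpbg
  have := hf hpbf
  have := hg hpbg
  rw [← hpbg.lift_snd (fX ≫ f) h' hw]
  infer_instance

end IsFlatStablyEpi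

namespace IsFlatStableQuotient

variable {R X Y Z : Scheme.{u}} {r₁ r₂ : R ⟶ X} {φ : X ⟶ Y}

theorem isFlatStablyEpi (hφ : IsFlatStableQuotient r₁ r₂ φ) : IsFlatStablyEpi φ :=
  fun _ _ _ φ' _ _ hpb => ⟨fun a b hab =>
    (hφ.existsUnique_desc hpb (φ' ≫ b) fun _ _ _ h _ _ => by rw [reassoc_of% h]).unique hab rfl⟩

theorem existsUnique_desc_self (hφ : IsFlatStableQuotient r₁ r₂ φ) (u : X ⟶ Z)
    (hu : r₁ ≫ u = r₂ ≫ u) : ∃! v : Y ⟶ Z, φ ≫ v = u :=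
  hφ.existsUnique_desc (.of_id_fst (f := φ)) u fun a b ρ _ h₁ h₂ => by
    rw [Category.comp_id] at h₁ h₂
    rw [h₁, h₂, Category.assoc, Category.assoc, hu]

theorem comp_isIso (hφ : IsFlatStableQuotient r₁ r₂ φ) (e : Y ⟶ Z) [IsIso e] :
    IsFlatStableQuotient r₁ r₂ (φ ≫ e) := by
  refine ⟨by rw [reassoc_of% hφ.w], fun {X' Y' W fX φ' f} _ hpb u hu => ?_⟩
  exact hφ.existsUnique_desc (f := f ≫ inv e) (hpb.of_iso (Iso.refl _) (Iso.refl _) (Iso.refl _)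
    (asIso e).symm (by simp) (by simp) (by simp) (by simp)) u hu

end IsFlatStableQuotient

/-! ### The absolute Frobenius -/

theorem charP_residueField (p : ℕ) [CharP k p] {X : Scheme.{u}} (f : X ⟶ Spk k) (x : X) :
    CharP (X.residueField x) p :=
  charP_of_injective_ringHom (Spec.preimage (X.fromSpecResidueField x ≫ f)).hom.injective p

namespace IsAbsoluteFrobenius

variable {X : Scheme.{u}} {q : ℕ} {F : X ⟶ X}

theorem preimage_eq (hF : IsAbsoluteFrobenius X q F) (U : X.Opens) : F ⁻¹ᵁ U = U :=
  TopologicalSpace.Opens.ext (Set.ext fun x => by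
    change F.base x ∈ U ↔ x ∈ U
    rw [hF.1 x])

theorem exists_app_eq_pow (hF : IsAbsoluteFrobenius X q F) (U : X.Opens) (a : Γ(X, F ⁻¹ᵁ U)) :
    ∃ b, F.app U b = a ^ q := by
  have e : op U = op (F ⁻¹ᵁ U) := by rw [hF.preimage_eq]
  refine ⟨X.presheaf.map (eqToHom e.symm) a, (hF.2 U e _).trans ?_⟩
  rw [← map_pow, ← CommRingCat.comp_apply, ← X.presheaf.map_comp, eqToHom_trans, eqToHom_refl,
    X.presheaf.map_id, CommRingCat.id_apply]

theorem isIntegralHom (hF : IsAbsoluteFrobenius X q F) (hq : 0 < q) : IsIntegralHom F where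
  isAffine_preimage U hU := by rwa [hF.preimage_eq]
  isIntegral_app U _ a := by
    obtain ⟨b, hb⟩ := hF.exists_app_eq_pow U a
    let := (F.app U).hom.toAlgebra
    exact IsIntegral.of_pow (R := Γ(X, U)) hq (hb ▸ isIntegral_algebraMap)

theorem universallyInjective {p n : ℕ} [Fact p.Prime] (hF : IsAbsoluteFrobenius X (p ^ n) F)
    (hX : ∀ x : X, CharP (X.residueField x) p) : UniversallyInjective F := by
  have hF' : Function.Injective F ∧ ∀ x, (F.residueFieldMap x).hom.IsPurelyInseparable := by
    refine ⟨fun x y hxy => (hF.1 x).symm.trans (hxy.trans (hF.1 y)), fun x => ?_⟩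
    let := (F.residueFieldMap x).hom.toAlgebra
    have := hX (F x)
    have : ExpChar (X.residueField (F x)) p := .prime Fact.out
    refine (isPurelyInseparable_iff_pow_mem _ p).2 fun a => ⟨n, ?_⟩
    obtain ⟨a, rfl⟩ := X.residue_surjective x a
    obtain ⟨V, hxV, a, rfl⟩ := X.presheaf.exists_germ_eq a
    obtain ⟨U, rfl⟩ : ∃ U, F ⁻¹ᵁ U = V := ⟨V, hF.preimage_eq V⟩
    obtain ⟨b, hb⟩ := hF.exists_app_eq_pow U a
    refine ⟨X.evaluation U (F x) hxV b, (Scheme.evaluation_naturality_apply F x hxV b).trans ?_⟩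
    rw [hb, map_pow]
    rfl
  exact ((tfae_universallyInjective F).out 0 2).2 hF'

end IsAbsoluteFrobenius

/-! ### Products -/

section Products

variable {S X X' Y Y' : Scheme.{u}} {a : X ⟶ S} {b : Y ⟶ S} {a' : X' ⟶ S} {b' : Y' ⟶ S}

/-- The product `f × g : X ×_S Y ⟶ X' ×_S Y'` of two morphisms over `S`. -/
def prodMap (f : X ⟶ X') (g : Y ⟶ Y') (hf : f ≫ a' = a) (hg : g ≫ b' = b) :
    pullback a b ⟶ pullback a' b' :=
  pullback.lift (pullback.fst a b ≫ f) (pullback.snd a b ≫ g)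
    (by rw [Category.assoc, Category.assoc, hf, hg, pullback.condition])

theorem prodMap_fst (f : X ⟶ X') (g : Y ⟶ Y') (hf : f ≫ a' = a) (hg : g ≫ b' = b) :
    prodMap f g hf hg ≫ pullback.fst a' b' = pullback.fst a b ≫ f :=
  pullback.lift_fst _ _ _

theorem prodMap_snd (f : X ⟶ X') (g : Y ⟶ Y') (hf : f ≫ a' = a) (hg : g ≫ b' = b) :
    prodMap f g hf hg ≫ pullback.snd a' b' = pullback.snd a b ≫ g :=
  pullback.lift_snd _ _ _

theorem comp_lift {T T' : Scheme.{u}} (t : T' ⟶ T) (x : T ⟶ X) (y : T ⟶ Y) (h : x ≫ a = y ≫ b) :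
    t ≫ pullback.lift x y h = pullback.lift (t ≫ x) (t ≫ y)
      (by rw [Category.assoc, Category.assoc, h]) := by
  apply pullback.hom_ext
  · rw [Category.assoc, pullback.lift_fst, pullback.lift_fst]
  · rw [Category.assoc, pullback.lift_snd, pullback.lift_snd]

theorem lift_prodMap {T : Scheme.{u}} (x : T ⟶ X) (y : T ⟶ Y) (h : x ≫ a = y ≫ b)
    (f : X ⟶ X') (g : Y ⟶ Y') (hf : f ≫ a' = a) (hg : g ≫ b' = b) :
    pullback.lift x y h ≫ prodMap f g hf hg = pullback.lift (x ≫ f) (y ≫ g)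
      (by rw [Category.assoc, Category.assoc, hf, hg, h]) := by
  apply pullback.hom_ext
  · rw [Category.assoc, prodMap_fst, pullback.lift_fst, pullback.lift_fst_assoc]
  · rw [Category.assoc, prodMap_snd, pullback.lift_snd, pullback.lift_snd_assoc]

theorem prodMap_comp {X'' Y'' : Scheme.{u}} {a'' : X'' ⟶ S} {b'' : Y'' ⟶ S}
    {f : X ⟶ X'} {g : Y ⟶ Y'} (hf : f ≫ a' = a) (hg : g ≫ b' = b)
    {f' : X' ⟶ X''} {g' : Y' ⟶ Y''} (hf' : f' ≫ a'' = a') (hg' : g' ≫ b'' = b') :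
    prodMap f g hf hg ≫ prodMap f' g' hf' hg' = prodMap (f ≫ f') (g ≫ g')
      (by rw [Category.assoc, hf', hf]) (by rw [Category.assoc, hg', hg]) :=
  (lift_prodMap _ _ _ _ _ _ _).trans (by simp only [prodMap, Category.assoc])

theorem isPullback_prodMap_id (f : X ⟶ X') (hf : f ≫ a' = a) (b : Y ⟶ S) :
    IsPullback (pullback.fst a b) (prodMap f (𝟙 Y) hf (Category.id_comp b)) f
      (pullback.fst a' b) := by
  refine .of_bot ?_ (pullback.lift_fst _ _ _).symm (.of_hasPullback a' b)
  simpa only [prodMap_snd, Category.comp_id, hf] using IsPullback.of_hasPullback a b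

theorem isPullback_id_prodMap (a : X ⟶ S) (g : Y ⟶ Y') (hg : g ≫ b' = b) :
    IsPullback (pullback.snd a b) (prodMap (𝟙 X) g (Category.id_comp a) hg) g
      (pullback.snd a b') := by
  refine .of_bot ?_ (pullback.lift_snd _ _ _).symm (IsPullback.of_hasPullback a b').flip
  simpa only [prodMap_fst, Category.comp_id, hg] using (IsPullback.of_hasPullback a b).flip

theorem IsFlatStablyEpi.prodMap [Flat a'] [Flat b] {f : X ⟶ X'} {g : Y ⟶ Y'}
    (hf : IsFlatStablyEpi f) (hg : IsFlatStablyEpi g) (hfa : f ≫ a' = a) (hgb : g ≫ b' = b) :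
    IsFlatStablyEpi (prodMap f g hfa hgb) := by
  have hfid := hf.of_isPullback (isPullback_prodMap_id f hfa b)
  have hidg := hg.of_isPullback (isPullback_id_prodMap a' g hgb)
  simpa only [prodMap_comp, Category.comp_id, Category.id_comp] using hfid.comp hidg

theorem IsFlatStableQuotient.existsUnique_desc_prodMap_id {R Z : Scheme.{u}} {r₁ r₂ : R ⟶ X}
    {φ : X ⟶ X'} (hφ : IsFlatStableQuotient r₁ r₂ φ) (hφa : φ ≫ a' = a) {c : R ⟶ S}
    (h₁ : r₁ ≫ a = c) (h₂ : r₂ ≫ a = c) [Flat b] (u : pullback a b ⟶ Z)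
    (hu : prodMap r₁ (𝟙 Y) h₁ (Category.id_comp b) ≫ u =
      prodMap r₂ (𝟙 Y) h₂ (Category.id_comp b) ≫ u) :
    ∃! v : pullback a' b ⟶ Z, prodMap φ (𝟙 Y) hφa (Category.id_comp b) ≫ v = u := by
  refine hφ.existsUnique_desc (isPullback_prodMap_id φ hφa b) u fun x x' ρ hxx' hx hx' => ?_
  have hsnd : x ≫ pullback.snd a b = x' ≫ pullback.snd a b := by
    simpa only [Category.assoc, prodMap_snd, Category.comp_id] using
      congr($hxx' ≫ pullback.snd a' b)
  have hρ : ρ ≫ c = (x ≫ pullback.snd a b) ≫ b := by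
    rw [← h₁, ← reassoc_of% hx, pullback.condition, Category.assoc]
  convert congr(pullback.lift ρ _ hρ ≫ $hu) using 1 <;> rw [← Category.assoc, lift_prodMap] <;>
    congr 1 <;> apply pullback.hom_ext
  · exact hx.trans (pullback.lift_fst _ _ _).symm
  · exact (Category.comp_id _).symm.trans (pullback.lift_snd _ _ _).symm
  · exact hx'.trans (pullback.lift_fst _ _ _).symm
  · exact (hsnd.symm.trans (Category.comp_id _).symm).trans (pullback.lift_snd _ _ _).symm

theorem IsFlatStableQuotient.existsUnique_desc_id_prodMap {P Z : Scheme.{u}} {s₁ s₂ : P ⟶ Y}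
    {ψ : Y ⟶ Y'} (hψ : IsFlatStableQuotient s₁ s₂ ψ) (hψb : ψ ≫ b' = b) {d : P ⟶ S}
    (h₁ : s₁ ≫ b = d) (h₂ : s₂ ≫ b = d) [Flat a] (u : pullback a b ⟶ Z)
    (hu : prodMap (𝟙 X) s₁ (Category.id_comp a) h₁ ≫ u =
      prodMap (𝟙 X) s₂ (Category.id_comp a) h₂ ≫ u) :
    ∃! v : pullback a b' ⟶ Z, prodMap (𝟙 X) ψ (Category.id_comp a) hψb ≫ v = u := by
  refine hψ.existsUnique_desc (isPullback_id_prodMap a ψ hψb) u fun y y' σ hyy' hy hy' => ?_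
  have hfst : y ≫ pullback.fst a b = y' ≫ pullback.fst a b := by
    simpa only [Category.assoc, prodMap_fst, Category.comp_id] using
      congr($hyy' ≫ pullback.fst a b')
  have hσ : (y ≫ pullback.fst a b) ≫ a = σ ≫ d := by
    rw [← h₁, ← reassoc_of% hy, ← pullback.condition, Category.assoc]
  convert congr(pullback.lift _ σ hσ ≫ $hu) using 1 <;> rw [← Category.assoc, lift_prodMap] <;>
    congr 1 <;> apply pullback.hom_ext
  · exact (Category.comp_id _).symm.trans (pullback.lift_fst _ _ _).symm
  · exact hy.trans (pullback.lift_snd _ _ _).symm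
  · exact (hfst.symm.trans (Category.comp_id _).symm).trans (pullback.lift_fst _ _ _).symm
  · exact hy'.trans (pullback.lift_snd _ _ _).symm

theorem IsFlatStableQuotient.existsUnique_desc_prodMap [Flat a'] [Flat b] {R P Z : Scheme.{u}}
    {r₁ r₂ : R ⟶ X} {s₁ s₂ : P ⟶ Y} {φ : X ⟶ X'} {ψ : Y ⟶ Y'} {c : R ⟶ S} {d : P ⟶ S} [Flat d]
    (hφ : IsFlatStableQuotient r₁ r₂ φ) (hψ : IsFlatStableQuotient s₁ s₂ ψ)
    (hφa : φ ≫ a' = a) (hψb : ψ ≫ b' = b) (hr₁ : r₁ ≫ a = c) (hr₂ : r₂ ≫ a = c)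
    (hs₁ : s₁ ≫ b = d) (hs₂ : s₂ ≫ b = d) (u : pullback a b ⟶ Z)
    (hur : prodMap r₁ (𝟙 Y) hr₁ (Category.id_comp b) ≫ u =
      prodMap r₂ (𝟙 Y) hr₂ (Category.id_comp b) ≫ u)
    (hus : prodMap (𝟙 X) s₁ (Category.id_comp a) hs₁ ≫ u =
      prodMap (𝟙 X) s₂ (Category.id_comp a) hs₂ ≫ u) :
    ∃! v : pullback a' b' ⟶ Z, prodMap φ ψ hφa hψb ≫ v = u := by
  obtain ⟨v, hv, -⟩ := hφ.existsUnique_desc_prodMap_id hφa hr₁ hr₂ u hur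
  -- This may be tested along the epimorphism `φ × 𝟙 P`, a flat base change of `φ`.
  have hvs : prodMap (𝟙 X') s₁ (Category.id_comp a') hs₁ ≫ v =
      prodMap (𝟙 X') s₂ (Category.id_comp a') hs₂ ≫ v := by
    have := (hφ.isFlatStablyEpi.of_isPullback (isPullback_prodMap_id φ hφa d)).epi
    rw [← cancel_epi (prodMap φ (𝟙 P) hφa (Category.id_comp d))]
    simpa only [← hv, ← Category.assoc, prodMap_comp, Category.comp_id, Category.id_comp] using hus
  obtain ⟨w, hw, -⟩ := hψ.existsUnique_desc_id_prodMap hψb hs₁ hs₂ v hvs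
  have := (hφ.isFlatStablyEpi.prodMap hψ.isFlatStablyEpi hφa hψb).epi
  have hwu : prodMap φ ψ hφa hψb ≫ w = u := by
    simp only [← hv, ← hw, ← Category.assoc, prodMap_comp, Category.comp_id, Category.id_comp]
  exact ⟨w, hwu, fun w' hw' => (cancel_epi _).1 (hw'.trans hwu.symm)⟩

end Products

/-! ### Actions of group schemes -/

namespace ActionOver

variable {G H : GroupSchemeOver k} {X Y : SchemeOver k}

/-- The action morphism `G × X ⟶ X`, i.e. the action evaluated at the universal point. -/
def hom (α : ActionOver G X) : pullback G.str X.str ⟶ X.carrier :=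
  α.act (pullback.fst G.str X.str) (pullback.snd G.str X.str) pullback.condition

theorem comp_hom (α : ActionOver G X) {T : Scheme.{u}} (f : T ⟶ pullback G.str X.str) :
    f ≫ α.hom = α.act (f ≫ pullback.fst _ _) (f ≫ pullback.snd _ _)
      (by rw [Category.assoc, pullback.condition, Category.assoc]) :=
  α.act_natural _ _ _ _ _

theorem lift_hom (α : ActionOver G X) {T : Scheme.{u}} (g : T ⟶ G.carrier) (x : T ⟶ X.carrier)
    (h : g ≫ G.str = x ≫ X.str) : pullback.lift g x h ≫ α.hom = α.act g x h :=
  (α.comp_hom _).trans (α.act_congr (pullback.lift_fst _ _ _) (pullback.lift_snd _ _ _) _ _)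

theorem hom_str (α : ActionOver G X) : α.hom ≫ X.str = pullback.snd G.str X.str ≫ X.str :=
  α.act_str _ _ _

theorem forall_act_comp_iff (α : ActionOver G X) (β : ActionOver H Y)
    {f : G.carrier ⟶ H.carrier} (hf : f ≫ H.str = G.str) {φ : X.carrier ⟶ Y.carrier}
    (hφ : φ ≫ Y.str = X.str) :
    (∀ {T : Scheme.{u}} (g : T ⟶ G.carrier) (x : T ⟶ X.carrier) (h h'),
      α.act g x h ≫ φ = β.act (g ≫ f) (x ≫ φ) h') ↔ α.hom ≫ φ = prodMap f φ hf hφ ≫ β.hom := by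
  refine ⟨fun hαβ => (hαβ _ _ pullback.condition _).trans (β.lift_hom _ _ _).symm,
    fun hαβ T g x h h' => ?_⟩
  rw [← α.lift_hom, Category.assoc, hαβ, ← Category.assoc, lift_prodMap, β.lift_hom]

end ActionOver

namespace GroupSchemeOver

variable (G : GroupSchemeOver k) (X : SchemeOver k)

theorem str_one_str : (X.str ≫ G.one) ≫ G.str = 𝟙 X.carrier ≫ X.str := by
  rw [Category.assoc, G.one_str, Category.comp_id, Category.id_comp]

theorem fst_str_eq_snd_fst_str :
    pullback.fst G.str (pullback.snd G.str X.str ≫ X.str) ≫ G.str =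
      (pullback.snd _ _ ≫ pullback.fst _ _) ≫ G.str := by
  rw [pullback.condition, Category.assoc, pullback.condition]

/-- The morphism `G × (G × X) ⟶ G × X`, `(g, (h, x)) ↦ (g h, x)`. -/
def mulProd : pullback G.str (pullback.snd G.str X.str ≫ X.str) ⟶ pullback G.str X.str :=
  pullback.lift (G.mul _ _ (G.fst_str_eq_snd_fst_str X)) (pullback.snd _ _ ≫ pullback.snd _ _)
    (by rw [G.mul_str, pullback.condition, Category.assoc])

variable {G X}

theorem lift_mulProd {T : Scheme.{u}} (a b : T ⟶ G.carrier) (x : T ⟶ X.carrier)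
    (hab : a ≫ G.str = b ≫ G.str) (hb : b ≫ G.str = x ≫ X.str)
    (h : a ≫ G.str = pullback.lift b x hb ≫ pullback.snd G.str X.str ≫ X.str) :
    pullback.lift a (pullback.lift b x hb) h ≫ G.mulProd X =
      pullback.lift (G.mul a b hab) x ((G.mul_str a b hab).trans (hab.trans hb)) := by
  apply pullback.hom_ext
  · rw [Category.assoc, mulProd, pullback.lift_fst, pullback.lift_fst, G.mul_natural _ _ _ _ (by
      rw [Category.assoc, Category.assoc, G.fst_str_eq_snd_fst_str X])]
    refine G.mul_congr (pullback.lift_fst _ _ _) ?_ _ _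
    rw [pullback.lift_snd_assoc, pullback.lift_fst]
  · rw [Category.assoc, mulProd, pullback.lift_snd, pullback.lift_snd, pullback.lift_snd_assoc,
      pullback.lift_snd]

end GroupSchemeOver

theorem GroupHom.mulProd_prodMap {G H : GroupSchemeOver k} (q : GroupHom G H) {X Y : SchemeOver k}
    {φ : X.carrier ⟶ Y.carrier} (hφ : φ ≫ Y.str = X.str) :
    G.mulProd X ≫ prodMap q.hom φ q.hom_str hφ =
      prodMap q.hom (prodMap q.hom φ q.hom_str hφ) q.hom_str
        (by rw [reassoc_of% prodMap_snd, hφ]) ≫ H.mulProd Y := by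
  have hstr : (pullback.fst G.str (pullback.snd G.str X.str ≫ X.str) ≫ q.hom) ≫ H.str =
      ((pullback.snd _ _ ≫ pullback.fst _ _) ≫ q.hom) ≫ H.str := by
    rw [Category.assoc, Category.assoc, q.hom_str, G.fst_str_eq_snd_fst_str X]
  rw [GroupSchemeOver.mulProd, GroupSchemeOver.mulProd, lift_prodMap, comp_lift]
  apply pullback.hom_ext
  · rw [pullback.lift_fst, pullback.lift_fst, q.hom_mul _ _ _ hstr, H.mul_natural _ _ _ _ (by
      rw [Category.assoc, Category.assoc, H.fst_str_eq_snd_fst_str Y])]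
    refine H.mul_congr (prodMap_fst ..).symm ?_ _ _
    rw [reassoc_of% prodMap_snd, prodMap_fst, Category.assoc]
  · rw [pullback.lift_snd, pullback.lift_snd, reassoc_of% prodMap_snd, prodMap_snd, Category.assoc]

namespace ActionOver

variable {G : GroupSchemeOver k} {X : SchemeOver k}

theorem mulProd_hom (α : ActionOver G X) :
    G.mulProd X ≫ α.hom = prodMap (𝟙 _) α.hom (Category.id_comp _) α.hom_str ≫ α.hom := by
  have hg' : (pullback.snd G.str (pullback.snd G.str X.str ≫ X.str) ≫ pullback.fst _ _) ≫ G.str =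
      (pullback.snd _ _ ≫ pullback.snd _ _) ≫ X.str := by
    rw [Category.assoc, pullback.condition, Category.assoc]
  have hg := (G.fst_str_eq_snd_fst_str X).trans hg'
  rw [GroupSchemeOver.mulProd, α.lift_hom, prodMap, α.lift_hom,
    α.mul_act _ _ _ _ _ hg' (by rw [α.act_str, hg])]
  exact α.act_congr (Category.comp_id _).symm (α.act_natural _ _ _ _ _).symm _ _

theorem one_hom (α : ActionOver G X) :
    pullback.lift (X.str ≫ G.one) (𝟙 X.carrier)
      (G.str_one_str X) ≫ α.hom = 𝟙 _ := by
  have h : (𝟙 X.carrier ≫ X.str ≫ G.one) ≫ G.str = 𝟙 X.carrier ≫ X.str := by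
    rw [Category.assoc, Category.assoc, G.one_str, Category.comp_id]
  rw [α.lift_hom, ← α.act_congr (Category.id_comp _) rfl h, α.one_act _ h]

/-- The action with a given action morphism `m : G × X ⟶ X`. -/
def ofHom (m : pullback G.str X.str ⟶ X.carrier) (hstr : m ≫ X.str = pullback.snd _ _ ≫ X.str)
    (hone : pullback.lift (X.str ≫ G.one) (𝟙 X.carrier)
      (G.str_one_str X) ≫ m = 𝟙 _)
    (hmul : G.mulProd X ≫ m = prodMap (𝟙 _) m (Category.id_comp _) hstr ≫ m) :
    ActionOver G X where
  act g x h := pullback.lift g x h ≫ m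
  act_str g x h := by rw [Category.assoc, hstr, pullback.lift_snd_assoc]
  act_natural f g x h h' := by rw [← Category.assoc, comp_lift]
  one_act x _ := by
    have := congr(x ≫ $hone)
    rw [← Category.assoc, comp_lift] at this
    simpa only [Category.comp_id] using this
  mul_act g g' x h₁ h₂ h₃ h₄ := by
    have h : g ≫ G.str = pullback.lift g' x h₃ ≫ pullback.snd G.str X.str ≫ X.str := by
      rw [pullback.lift_snd_assoc, h₁, h₃]
    rw [← GroupSchemeOver.lift_mulProd g g' x h₁ h₃ h, Category.assoc, hmul, ← Category.assoc,
      lift_prodMap]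
    simp only [Category.comp_id]

theorem ofHom_hom (m : pullback G.str X.str ⟶ X.carrier) (hstr hone hmul) :
    (ofHom m hstr hone hmul).hom = m := by
  have : pullback.lift (pullback.fst G.str X.str) (pullback.snd _ _) pullback.condition = 𝟙 _ :=
    pullback.hom_ext (by rw [pullback.lift_fst, Category.id_comp])
      (by rw [pullback.lift_snd, Category.id_comp])
  change pullback.lift (pullback.fst G.str X.str) _ _ ≫ m = m
  rw [this, Category.id_comp]

end ActionOver

namespace ActionOver

variable {G H : GroupSchemeOver k} {X Y : SchemeOver k} {α : ActionOver G X} {q : GroupHom G H}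
  {φ : X.carrier ⟶ Y.carrier}

theorem exists_hom_eq (hφY : φ ≫ Y.str = X.str) (hq : IsFlatStablyEpi q.hom)
    (hφ : IsFlatStablyEpi φ) {m : pullback H.str Y.str ⟶ Y.carrier}
    (hm : prodMap q.hom φ q.hom_str hφY ≫ m = α.hom ≫ φ) : ∃ β : ActionOver H Y, β.hom = m := by
  have := hφ.epi
  have hqφ := hq.prodMap hφ q.hom_str hφY
  have := hqφ.epi
  have hstr : m ≫ Y.str = pullback.snd H.str Y.str ≫ Y.str := by
    rw [← cancel_epi (prodMap q.hom φ q.hom_str hφY), reassoc_of% hm, reassoc_of% prodMap_snd,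
      hφY, α.hom_str]
  have hone : pullback.lift (Y.str ≫ H.one) (𝟙 Y.carrier) (H.str_one_str Y) ≫ m = 𝟙 _ := by
    rw [← cancel_epi φ]
    calc φ ≫ pullback.lift (Y.str ≫ H.one) (𝟙 Y.carrier) _ ≫ m
        = pullback.lift (X.str ≫ G.one) (𝟙 X.carrier) (G.str_one_str X) ≫
            prodMap q.hom φ q.hom_str hφY ≫ m := by
          rw [← Category.assoc, ← Category.assoc, comp_lift, lift_prodMap]
          simp only [Category.assoc, q.hom_one, reassoc_of% hφY, Category.comp_id, Category.id_comp]
      _ = φ ≫ 𝟙 Y.carrier := by rw [hm, reassoc_of% α.one_hom, Category.comp_id]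
  have hmul : H.mulProd Y ≫ m = prodMap (𝟙 _) m (Category.id_comp _) hstr ≫ m := by
    have hb : prodMap q.hom φ q.hom_str hφY ≫ pullback.snd H.str Y.str ≫ Y.str =
        pullback.snd G.str X.str ≫ X.str := by rw [reassoc_of% prodMap_snd, hφY]
    have := (hq.prodMap hqφ q.hom_str hb).epi
    rw [← cancel_epi (prodMap q.hom (prodMap q.hom φ q.hom_str hφY) q.hom_str hb)]
    calc prodMap q.hom (prodMap q.hom φ q.hom_str hφY) _ _ ≫ H.mulProd Y ≫ m
        = G.mulProd X ≫ α.hom ≫ φ := by rw [← hm, reassoc_of% q.mulProd_prodMap hφY]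
      _ = prodMap (𝟙 _) α.hom (Category.id_comp _) α.hom_str ≫
            prodMap q.hom φ q.hom_str hφY ≫ m := by rw [reassoc_of% α.mulProd_hom, hm]
      _ = prodMap q.hom (prodMap q.hom φ q.hom_str hφY) _ hb ≫
            prodMap (𝟙 _) m (Category.id_comp _) hstr ≫ m := by
          rw [← Category.assoc, ← Category.assoc, prodMap_comp, prodMap_comp]
          simp only [hm, Category.comp_id, Category.id_comp]
  exact ⟨ofHom m hstr hone hmul, ofHom_hom m hstr hone hmul⟩

theorem act_eq_of_isEquivariantRel (hq : IsFlatStablyEpi q.hom)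
    (hφ : IsFlatStablyEpi φ) {β β' : ActionOver H Y}
    (hβ : IsEquivariantRel q α β φ) (hβ' : IsEquivariantRel q α β' φ) {T : Scheme.{u}}
    (g : T ⟶ H.carrier) (y : T ⟶ Y.carrier) (h : g ≫ H.str = y ≫ Y.str) :
    β'.act g y h = β.act g y h := by
  have hφY := hβ.1
  have := (hq.prodMap hφ q.hom_str hφY).epi
  have hhom : β'.hom = β.hom := by
    rw [← cancel_epi (prodMap q.hom φ q.hom_str hφY),
      ← (forall_act_comp_iff α β q.hom_str hφY).1 hβ.2,
      ← (forall_act_comp_iff α β' q.hom_str hφY).1 hβ'.2]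
  rw [← lift_hom, ← lift_hom, hhom]

theorem act_comp_of_isEquivariantRel_comp (hq : IsFlatStablyEpi q.hom) (hφ : IsFlatStablyEpi φ)
    {K : GroupSchemeOver k} {Z : SchemeOver k} {f : GroupHom G K} {β : ActionOver H Y}
    {γ : ActionOver K Z} {χ : H.carrier ⟶ K.carrier} {ψ : Y.carrier ⟶ Z.carrier}
    (hχ : q.hom ≫ χ = f.hom) (hβ : IsEquivariantRel q α β φ)
    (hγ : IsEquivariantRel f α γ (φ ≫ ψ)) {T : Scheme.{u}} (g : T ⟶ H.carrier)
    (y : T ⟶ Y.carrier) (h : g ≫ H.str = y ≫ Y.str)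
    (h' : (g ≫ χ) ≫ K.str = (y ≫ ψ) ≫ Z.str) : β.act g y h ≫ ψ = γ.act (g ≫ χ) (y ≫ ψ) h' := by
  have := hq.epi
  have := hφ.epi
  have hφY := hβ.1
  have := (hq.prodMap hφ q.hom_str hφY).epi
  have hχK : χ ≫ K.str = H.str := by
    rw [← cancel_epi q.hom, reassoc_of% hχ, f.hom_str, q.hom_str]
  have hψZ : ψ ≫ Z.str = Y.str := by
    rw [← cancel_epi φ, ← Category.assoc, hγ.1, hφY]
  refine (forall_act_comp_iff β γ hχK hψZ).2 ?_ g y h h'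
  rw [← cancel_epi (prodMap q.hom φ q.hom_str hφY)]
  calc prodMap q.hom φ q.hom_str hφY ≫ β.hom ≫ ψ
      = α.hom ≫ φ ≫ ψ := by
        rw [← Category.assoc, ← (forall_act_comp_iff α β q.hom_str hφY).1 hβ.2, Category.assoc]
    _ = prodMap f.hom (φ ≫ ψ) f.hom_str hγ.1 ≫ γ.hom :=
        (forall_act_comp_iff α γ f.hom_str hγ.1).1 hγ.2
    _ = prodMap q.hom φ q.hom_str hφY ≫ prodMap χ ψ hχK hψZ ≫ γ.hom := by
        rw [← Category.assoc, prodMap_comp]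
        simp only [hχ]

end ActionOver

/-- The group of points `T ⟶ G` lying over a fixed `t : T ⟶ Spec k`. -/
def GroupSchemeOver.Points (G : GroupSchemeOver k) {T : Scheme.{u}} (t : T ⟶ Spk k) : Type u :=
  {a : T ⟶ G.carrier // a ≫ G.str = t}

namespace GroupSchemeOver.Points

variable {G : GroupSchemeOver k} {T : Scheme.{u}} {t : T ⟶ Spk k}

instance : Mul (G.Points t) :=
  ⟨fun a b => ⟨G.mul a.1 b.1 (a.2.trans b.2.symm), (G.mul_str _ _ _).trans a.2⟩⟩

instance : One (G.Points t) := ⟨⟨t ≫ G.one, by rw [Category.assoc, G.one_str, Category.comp_id]⟩⟩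

instance : Inv (G.Points t) := ⟨fun a => ⟨G.inv a.1, (G.inv_str _).trans a.2⟩⟩

theorem val_str_one (a : G.Points t) : a.1 ≫ G.str ≫ G.one = t ≫ G.one := by
  rw [← Category.assoc, a.2]

instance : Group (G.Points t) := Group.ofLeftAxioms
  (fun a b c => Subtype.ext (G.mul_assoc _ _ _ _ _ _ _))
  (fun a => Subtype.ext <| by
    have h : (a.1 ≫ G.str ≫ G.one) ≫ G.str = a.1 ≫ G.str := by
      rw [Category.assoc, Category.assoc, G.one_str, Category.comp_id]
    exact (G.mul_congr a.val_str_one.symm rfl _ h).trans (G.one_mul a.1 h))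
  (fun a => Subtype.ext ((G.inv_mul a.1 _).trans a.val_str_one))

end GroupSchemeOver.Points

namespace GroupHom

variable {N G H : GroupSchemeOver k}

/-- The group homomorphism induced by a homomorphism of group schemes on points over `t`. -/
def mapPoints (f : GroupHom G H) {T : Scheme.{u}} (t : T ⟶ Spk k) : G.Points t →* H.Points t :=
  MonoidHom.mk' (fun a => ⟨a.1 ≫ f.hom, by rw [Category.assoc, f.hom_str, a.2]⟩)
    (fun _ _ => Subtype.ext (f.hom_mul _ _ _ _))

/-- A homomorphism `ι : N ⟶ G` is normal if `g N = N g` for every point `g` of `G`; only the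
inclusion `g N ⊆ N g` is demanded, the other one being its instance at `g⁻¹`. -/
def IsNormal (ι : GroupHom N G) : Prop :=
  ∀ ⦃T : Scheme.{u}⦄ ⦃t : T ⟶ Spk k⦄ (g : G.Points t) (m : N.Points t),
    ∃ m' : N.Points t, ι.mapPoints t m' * g = g * ι.mapPoints t m

theorem isNormal_of_isPullback {ι : GroupHom N G} {f : GroupHom G H}
    (hι : IsPullback ι.hom N.str f.hom H.one) : ι.IsNormal := by
  intro T t g m
  have hm : f.mapPoints t (ι.mapPoints t m) = 1 := Subtype.ext <| by
    change (m.1 ≫ ι.hom) ≫ f.hom = t ≫ H.one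
    rw [Category.assoc, hι.w, reassoc_of% m.2]
  have hconj : f.mapPoints t (g * ι.mapPoints t m * g⁻¹) = 1 := by
    rw [map_mul, map_mul, hm, mul_one, ← map_mul, mul_inv_cancel, map_one]
  have hconj_val : (g * ι.mapPoints t m * g⁻¹).1 ≫ f.hom = t ≫ H.one := congrArg Subtype.val hconj
  refine ⟨⟨hι.lift _ _ hconj_val, hι.lift_snd _ _ _⟩, ?_⟩
  have hlift : ι.mapPoints t ⟨hι.lift _ _ hconj_val, hι.lift_snd _ _ _⟩ =
      g * ι.mapPoints t m * g⁻¹ := Subtype.ext (hι.lift_fst _ _ _)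
  rw [hlift, inv_mul_cancel_right]

theorem IsNormal.exists_mul_eq {ι : GroupHom N G} (hι : ι.IsNormal) {T : Scheme.{u}}
    (g : T ⟶ G.carrier) (m : T ⟶ N.carrier) (h : m ≫ N.str = g ≫ G.str) :
    ∃ m' : T ⟶ N.carrier, m' ≫ N.str = g ≫ G.str ∧
      ∀ h₁ h₂, G.mul (m' ≫ ι.hom) g h₁ = G.mul g (m ≫ ι.hom) h₂ := by
  obtain ⟨m', hm'⟩ := hι ⟨g, rfl⟩ ⟨m, h⟩
  exact ⟨m'.1, m'.2, fun _ _ => congrArg Subtype.val hm'⟩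

end GroupHom

namespace ActionOver

variable {N G H : GroupSchemeOver k} {X Y : SchemeOver k} {α : ActionOver G X} {ι : GroupHom N G}
  {q : GroupHom G H} {φ : X.carrier ⟶ Y.carrier}

theorem act_comp_of_hom_comp {β : ActionOver N X} {Z : Scheme.{u}} {φ : X.carrier ⟶ Z}
    (hφ : pullback.snd N.str X.str ≫ φ = β.hom ≫ φ) {T : Scheme.{u}} (m : T ⟶ N.carrier)
    (x : T ⟶ X.carrier) (h : m ≫ N.str = x ≫ X.str) : β.act m x h ≫ φ = x ≫ φ := by
  rw [← β.lift_hom, Category.assoc, ← hφ, pullback.lift_snd_assoc]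

theorem act_mul_comp {Z : Scheme.{u}} {φ : X.carrier ⟶ Z}
    (hφ : pullback.snd N.str X.str ≫ φ = (α.res ι).hom ≫ φ) {T : Scheme.{u}} (m : T ⟶ N.carrier)
    (g : T ⟶ G.carrier) (x : T ⟶ X.carrier) (h : m ≫ N.str = g ≫ G.str)
    (hx : g ≫ G.str = x ≫ X.str) (h₁ : (m ≫ ι.hom) ≫ G.str = g ≫ G.str)
    (h₂ : G.mul (m ≫ ι.hom) g h₁ ≫ G.str = x ≫ X.str) :
    α.act (G.mul (m ≫ ι.hom) g h₁) x h₂ ≫ φ = α.act g x hx ≫ φ := by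
  have hm : m ≫ N.str = α.act g x hx ≫ X.str := by rw [α.act_str, h, hx]
  rw [α.mul_act _ _ _ h₁ h₂ hx (by rw [Category.assoc, ι.hom_str, hm])]
  exact act_comp_of_hom_comp hφ m _ hm

theorem act_act_comp (hι : ι.IsNormal) {Z : Scheme.{u}} {φ : X.carrier ⟶ Z}
    (hφ : pullback.snd N.str X.str ≫ φ = (α.res ι).hom ≫ φ) {T : Scheme.{u}} (m : T ⟶ N.carrier)
    (g : T ⟶ G.carrier) (x : T ⟶ X.carrier) (h : m ≫ N.str = x ≫ X.str)
    (hx : g ≫ G.str = x ≫ X.str) (h₁ : g ≫ G.str = (α.res ι).act m x h ≫ X.str) :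
    α.act g ((α.res ι).act m x h) h₁ ≫ φ = α.act g x hx ≫ φ := by
  obtain ⟨m', hm'str, hm'⟩ := hι.exists_mul_eq g m (h.trans hx.symm)
  have hm'g : (m' ≫ ι.hom) ≫ G.str = g ≫ G.str := by rw [Category.assoc, ι.hom_str, hm'str]
  have hm : (m ≫ ι.hom) ≫ G.str = x ≫ X.str := by rw [Category.assoc, ι.hom_str, h]
  have hgm : g ≫ G.str = (m ≫ ι.hom) ≫ G.str := hx.trans hm.symm
  calc α.act g ((α.res ι).act m x h) h₁ ≫ φ
      = α.act (G.mul g (m ≫ ι.hom) hgm) x ((G.mul_str _ _ _).trans hx) ≫ φ :=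
        congr($((α.mul_act _ _ _ _ _ hm h₁).symm) ≫ φ)
    _ = α.act (G.mul (m' ≫ ι.hom) g hm'g) x ((G.mul_str _ _ _).trans (hm'g.trans hx)) ≫ φ :=
        congr($(α.act_congr (hm' hm'g hgm).symm rfl _ _) ≫ φ)
    _ = α.act g x hx ≫ φ := act_mul_comp hφ m' g x hm'str hx hm'g _

theorem prodMap_selfAction_hom_comp {Z : Scheme.{u}} {φ : X.carrier ⟶ Z}
    (hφ : pullback.snd N.str X.str ≫ φ = (α.res ι).hom ≫ φ) :
    prodMap (pullback.snd N.str G.str) (𝟙 X.carrier) rfl (Category.id_comp _) ≫ α.hom ≫ φ =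
      prodMap (G.selfAction.res ι).hom (𝟙 X.carrier) (G.selfAction.res ι).hom_str
        (Category.id_comp _) ≫ α.hom ≫ φ := by
  have hstr : ((pullback.fst (pullback.snd N.str G.str ≫ G.str) X.str ≫ pullback.fst N.str G.str) ≫
      ι.hom) ≫ G.str = (pullback.fst _ _ ≫ pullback.snd _ _) ≫ G.str := by
    simp only [Category.assoc, ι.hom_str, pullback.condition]
  have hg : pullback.fst (pullback.snd N.str G.str ≫ G.str) X.str ≫ (G.selfAction.res ι).hom =
      G.mul ((pullback.fst _ _ ≫ pullback.fst _ _) ≫ ι.hom) (pullback.fst _ _ ≫ pullback.snd _ _)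
        hstr := (G.selfAction.res ι).comp_hom _
  rw [prodMap, prodMap, ← Category.assoc, α.lift_hom, ← Category.assoc, α.lift_hom]
  refine (act_mul_comp hφ _ _ _ ?_ _ hstr ?_).symm.trans congr($(α.act_congr hg.symm rfl _ _) ≫ φ)
  · simp only [Category.assoc, pullback.condition]
  · rw [G.mul_str, hstr, Category.comp_id, Category.assoc, pullback.condition]

theorem prodMap_id_res_hom_comp (hι : ι.IsNormal) {Z : Scheme.{u}} {φ : X.carrier ⟶ Z}
    (hφ : pullback.snd N.str X.str ≫ φ = (α.res ι).hom ≫ φ) :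
    prodMap (𝟙 G.carrier) (pullback.snd N.str X.str) (Category.id_comp _) rfl ≫ α.hom ≫ φ =
      prodMap (𝟙 G.carrier) (α.res ι).hom (Category.id_comp _) (α.res ι).hom_str ≫
        α.hom ≫ φ := by
  have hstr : (pullback.snd G.str (pullback.snd N.str X.str ≫ X.str) ≫ pullback.fst N.str X.str) ≫
      N.str = (pullback.snd _ _ ≫ pullback.snd _ _) ≫ X.str := by
    simp only [Category.assoc, pullback.condition]
  have hx : pullback.snd G.str (pullback.snd N.str X.str ≫ X.str) ≫ (α.res ι).hom =
      (α.res ι).act (pullback.snd _ _ ≫ pullback.fst _ _) (pullback.snd _ _ ≫ pullback.snd _ _)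
        hstr := (α.res ι).comp_hom _
  rw [prodMap, prodMap, ← Category.assoc, α.lift_hom, ← Category.assoc, α.lift_hom]
  refine (act_act_comp hι hφ _ _ _ hstr _ ?_).symm.trans congr($(α.act_congr rfl hx.symm _ _) ≫ φ)
  rw [(α.res ι).act_str, Category.comp_id, Category.assoc, pullback.condition]

theorem exists_isEquivariantRel (hι : ι.IsNormal)
    (hq : IsFlatStableQuotient (pullback.snd N.str G.str) (G.selfAction.res ι).hom q.hom)
    (hφ : IsFlatStableQuotient (pullback.snd N.str X.str) (α.res ι).hom φ)
    (hφY : φ ≫ Y.str = X.str) : ∃ β : ActionOver H Y, IsEquivariantRel q α β φ := by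
  obtain ⟨m, hm, -⟩ := hq.existsUnique_desc_prodMap hφ q.hom_str hφY rfl
    (G.selfAction.res ι).hom_str rfl (α.res ι).hom_str (α.hom ≫ φ)
    (prodMap_selfAction_hom_comp hφ.w) (prodMap_id_res_hom_comp hι hφ.w)
  obtain ⟨β, rfl⟩ := exists_hom_eq hφY hq.isFlatStablyEpi hφ.isFlatStablyEpi hm
  exact ⟨β, hφY, (forall_act_comp_iff α β q.hom_str hφY).2 hm.symm⟩

theorem res_act_comp_eq {f : GroupHom G H} {β : ActionOver H Y}
    (hι : ι.hom ≫ f.hom = N.str ≫ H.one) (hφ : IsEquivariantRel f α β φ) {T : Scheme.{u}}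
    (m : T ⟶ N.carrier) (x : T ⟶ X.carrier) (h : m ≫ N.str = x ≫ X.str) :
    (α.res ι).act m x h ≫ φ = x ≫ φ := by
  have hm : (m ≫ ι.hom) ≫ f.hom = (x ≫ φ) ≫ Y.str ≫ H.one := by
    rw [Category.assoc, hι, reassoc_of% h, Category.assoc, reassoc_of% hφ.1]
  have h' : ((x ≫ φ) ≫ Y.str ≫ H.one) ≫ H.str = (x ≫ φ) ≫ Y.str := by
    simp only [Category.assoc, H.one_str, Category.comp_id]
  exact (hφ.2 _ _ _ (by rw [hm, h'])).trans ((β.act_congr hm rfl _ h').trans (β.one_act _ h'))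

theorem snd_comp_eq_res_hom_comp {f : GroupHom G H} {β : ActionOver H Y}
    (hι : ι.hom ≫ f.hom = N.str ≫ H.one) (hφ : IsEquivariantRel f α β φ) :
    pullback.snd N.str X.str ≫ φ = (α.res ι).hom ≫ φ :=
  (res_act_comp_eq hι hφ _ _ _).symm

end ActionOver

theorem GroupHom.isEquivariantRel_selfAction {G H : GroupSchemeOver k} (f : GroupHom G H) :
    IsEquivariantRel f G.selfAction H.selfAction f.hom :=
  ⟨f.hom_str, f.hom_mul⟩

theorem TwistedActionData.isEquivariantRel {p n : ℕ} [Fact p.Prime] [CharP k p]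
    {G : GroupSchemeOver k} {X : SchemeOver k} {α : ActionOver G X} {GT : TwistedGroupData k p n G}
    {FD : FrobeniusData k p n X} (TA : TwistedActionData α GT FD) :
    IsEquivariantRel GT.rel α TA.tact FD.rel :=
  ⟨FD.rel_str, TA.rel_equivariant⟩

theorem TwistedGroupData.isAffineHom_rel {p n : ℕ} [Fact p.Prime] [CharP k p]
    {G : GroupSchemeOver k} (GT : TwistedGroupData k p n G) : IsAffineHom GT.rel.hom := by
  have : IsAffineHom GT.pr := MorphismProperty.of_isPullback GT.is_pullback.flip
    (inferInstanceAs (IsAffineHom (Spec.map _)))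
  have : IsAffineHom (GT.rel.hom ≫ GT.pr) := by
    have := GT.abs_frob.isIntegralHom (pow_pos (Fact.out : p.Prime).pos n)
    rw [GT.rel_pr]
    infer_instance
  exact .of_comp GT.rel.hom GT.pr

theorem IsCatQuotient.isFlatStableQuotient {N : GroupSchemeOver k} {X Q : SchemeOver k}
    {β : ActionOver N X} {φ : X.carrier ⟶ Q.carrier} (hQ : IsCatQuotient β Q φ) {p n : ℕ}
    [Fact p.Prime] [CharP k p] {F : X.carrier ⟶ X.carrier}
    (hF : IsAbsoluteFrobenius X.carrier (p ^ n) F) [IsAffineHom N.str]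
    (hβF : pullback.snd N.str X.str ≫ F = β.hom ≫ F) :
    IsFlatStableQuotient (pullback.snd N.str X.str) β.hom φ := by
  have := hF.isIntegralHom (pow_pos (Fact.out : p.Prime).pos n)
  have := hF.universallyInjective (charP_residueField p X.str)
  have : IsAffineHom (pullback.snd N.str X.str) :=
    MorphismProperty.of_isPullback (IsPullback.of_hasPullback N.str X.str) inferInstance
  obtain ⟨Y, φY, hφY⟩ := exists_isFlatStableQuotient (f := F) rfl hβF.symm
  obtain ⟨π, hπ, -⟩ := hφY.existsUnique_desc_self X.str β.hom_str.symm
  obtain ⟨w, rfl, -⟩ := hφY.existsUnique_desc_self φ (hQ.2.1 _ _ _).symm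
  obtain ⟨v, hv, -⟩ := hQ.2.2 ⟨Y, π⟩ φY hπ (ActionOver.act_comp_of_hom_comp hφY.w)
  have hwv : w ≫ v = 𝟙 Y := by
    have := hφY.isFlatStablyEpi.epi
    rw [← cancel_epi φY, ← Category.assoc, hv, Category.comp_id]
  have hvw : v ≫ w = 𝟙 Q.carrier := (hQ.2.2 Q _ hQ.1 hQ.2.1).unique
    (by rw [← Category.assoc, hv]) (Category.comp_id _)
  have : IsIso w := ⟨v, hwv, hvw⟩
  exact hφY.comp_isIso w

theorem quotient_action_by_frobenius_kernel_general
    {k : Type u} [Field k] (p : ℕ) [Fact p.Prime] [CharP k p]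
    (G : GroupSchemeOver k)
    (X : SchemeOver k) (α : ActionOver G X)
    (n : ℕ)
    (GT : TwistedGroupData k p n G)
    (Gn : GroupSchemeOver k) (ι : GroupHom Gn G)
    (hker : IsPullback ι.hom Gn.str GT.rel.hom GT.tw.one)
    (FDX : FrobeniusData k p n X) (TA : TwistedActionData α GT FDX)
    (QX : SchemeOver k) (φX : X.carrier ⟶ QX.carrier)
    (hQX : IsCatQuotient (α.res ι) QX φX)
    (QG : GroupSchemeOver k) (qG : GroupHom G QG)
    (hQG : IsCatQuotient ((G.selfAction).res ι) QG.toSchemeOver qG.hom)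
    (ψX : QX.carrier ⟶ FDX.tw.carrier) (hψX : φX ≫ ψX = FDX.rel)
    (ψG : QG.carrier ⟶ GT.tw.carrier) (hψG : qG.hom ≫ ψG = GT.rel.hom) :
    ∃ β : ActionOver QG QX,
      (∀ {T : Scheme.{u}} (g : T ⟶ G.carrier) (x : T ⟶ X.carrier) (h h'),
        α.act g x h ≫ φX = β.act (g ≫ qG.hom) (x ≫ φX) h') ∧
      (∀ β' : ActionOver QG QX,
        (∀ {T : Scheme.{u}} (g : T ⟶ G.carrier) (x : T ⟶ X.carrier) (h h'),
          α.act g x h ≫ φX = β'.act (g ≫ qG.hom) (x ≫ φX) h') →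
        ∀ {T : Scheme.{u}} (gq : T ⟶ QG.carrier) (xq : T ⟶ QX.carrier) (h),
          β'.act gq xq h = β.act gq xq h) ∧
      (∀ {T : Scheme.{u}} (gq : T ⟶ QG.carrier) (xq : T ⟶ QX.carrier) (h h'),
        β.act gq xq h ≫ ψX = TA.tact.act (gq ≫ ψG) (xq ≫ ψX) h') := by
  have hG := GroupHom.isEquivariantRel_selfAction GT.rel
  have hX := TA.isEquivariantRel
  have := GT.isAffineHom_rel
  have : IsAffineHom Gn.str := MorphismProperty.of_isPullback hker inferInstance
  have hφ := hQX.isFlatStableQuotient FDX.abs_frob <| by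
    rw [← FDX.rel_pr, ← Category.assoc, ActionOver.snd_comp_eq_res_hom_comp hker.w hX,
      Category.assoc]
  have hq := hQG.isFlatStableQuotient GT.abs_frob <| by
    rw [← GT.rel_pr, ← Category.assoc, ActionOver.snd_comp_eq_res_hom_comp hker.w hG,
      Category.assoc]
  obtain ⟨β, hβ⟩ :=
    ActionOver.exists_isEquivariantRel (GroupHom.isNormal_of_isPullback hker) hq hφ hQX.1
  have hqe := hq.isFlatStablyEpi
  have hφe := hφ.isFlatStablyEpi
  refine ⟨β, hβ.2, fun β' hβ' T => ?_, fun {T} => ?_⟩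
  · exact ActionOver.act_eq_of_isEquivariantRel hqe hφe hβ ⟨hQX.1, hβ'⟩
  · exact ActionOver.act_comp_of_isEquivariantRel_comp hqe hφe hψG hβ (by rwa [hψX])

/-- Let `k` be a field of characteristic `p > 0`, `G` an algebraic group
over `k`, `X` a `G`-scheme of finite type, and `n > 0`. Let `G_n` (embedded by `ι`) be the
`n`-th Frobenius kernel of `G`. Then there is a unique action of `G/G_n` on `X/G_n` making
`φ_{X,G_n}` equivariant relative to `φ_{G,G_n}`; moreover `ψ_{X,G_n} : X/G_n ⟶ X^{(pⁿ)}` is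
equivariant relative to `ψ_{G,G_n} : G/G_n ⟶ G^{(pⁿ)}`. -/
theorem quotient_action_by_frobenius_kernel
    {k : Type u} [Field k] (p : ℕ) [Fact p.Prime] [CharP k p]
    (G : GroupSchemeOver k) (hGalg : G.IsAlgebraic)
    (X : SchemeOver k) (hXft : X.IsFiniteType) (α : ActionOver G X)
    (n : ℕ) (hn : 0 < n)
    -- the Frobenius twist `G^{(pⁿ)}` as a group, with relative Frobenius homomorphism:
    (GT : TwistedGroupData k p n G)
    -- the `n`-th Frobenius kernel `G_n = ker F^n_{G/k}`:
    (Gn : GroupSchemeOver k) (ι : GroupHom Gn G) (hιci : IsClosedImmersion ι.hom)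
    (hker : IsPullback ι.hom Gn.str GT.rel.hom GT.tw.one)
    -- the Frobenius twist of `X` and the twisted action of `G^{(pⁿ)}` on it:
    (FDX : FrobeniusData k p n X) (TA : TwistedActionData α GT FDX)
    -- the categorical quotients `X/G_n` and `G/G_n`:
    (QX : SchemeOver k) (φX : X.carrier ⟶ QX.carrier)
    (hQX : IsCatQuotient (α.res ι) QX φX)
    (QG : GroupSchemeOver k) (qG : GroupHom G QG)
    (hQG : IsCatQuotient ((G.selfAction).res ι) QG.toSchemeOver qG.hom)
    -- the factorizations of the relative Frobenii through the quotients: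
    (ψX : QX.carrier ⟶ FDX.tw.carrier) (hψX : φX ≫ ψX = FDX.rel)
    (ψG : QG.carrier ⟶ GT.tw.carrier) (hψG : qG.hom ≫ ψG = GT.rel.hom) :
    ∃ β : ActionOver QG QX,
      -- `φX` is equivariant relative to `qG`:
      (∀ {T : Scheme.{u}} (g : T ⟶ G.carrier) (x : T ⟶ X.carrier) (h h'),
        α.act g x h ≫ φX = β.act (g ≫ qG.hom) (x ≫ φX) h') ∧
      -- uniqueness of such an action:
      (∀ β' : ActionOver QG QX,
        (∀ {T : Scheme.{u}} (g : T ⟶ G.carrier) (x : T ⟶ X.carrier) (h h'),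
          α.act g x h ≫ φX = β'.act (g ≫ qG.hom) (x ≫ φX) h') →
        ∀ {T : Scheme.{u}} (gq : T ⟶ QG.carrier) (xq : T ⟶ QX.carrier) (h),
          β'.act gq xq h = β.act gq xq h) ∧
      -- `ψX` is equivariant relative to `ψG`:
      (∀ {T : Scheme.{u}} (gq : T ⟶ QG.carrier) (xq : T ⟶ QX.carrier) (h h'),
        β.act gq xq h ≫ ψX = TA.tact.act (gq ≫ ψG) (xq ≫ ψX) h') := by
  exact quotient_action_by_frobenius_kernel_general p G X α n GT Gn ι hker FDX TA QX φX hQX QG qG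
    hQG ψX hψX ψG hψG
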